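/- Let (b₁,b₂) ∈ B with b₃ = (b₁b₂)^(−1), and assume G^S₊(b₁,b₂,b₃) = G^S₋(b₁,b₂,b₃) > 0 (the irrotational S₂ regime); set N = √(G^S₊(b₁,b₂,b₃)). Then the point p* = (b₁, b₂, 0, 0, 0, N, 0, 0, 0, 0) is an equilibrium of the reduced equations of motion, the set {η_r = 0} is invariant under the reduced flow, and p* is Liapunov stable relative to the set {(b,c,η_l,η_r) : ‖η_l‖ = N, η_r = 0}: for every ε > 0 there is δ > 0 such that every solution γ of the reduced equations defined on [0,T) with γ(0) in this set and ‖γ(0) − p*‖ < δ satisfies ‖γ(t) − p*‖ < ε for all t ∈ [0,T). -/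

import Mathlib

open Real MeasureTheory

/-- `C₁(x,y,z) = 2πg ∫₀^∞ s·((s+x²)(s+y²)(s+z²))^(−3/2) ds`. -/
noncomputable def riC1 (g x y z : ℝ) : ℝ :=
  2 * π * g * ∫ s in Set.Ioi (0:ℝ),
    s * ((s + x ^ 2) * (s + y ^ 2) * (s + z ^ 2)) ^ (-(3:ℝ)/2)

/-- `C₂(x,y,z) = 2πg ∫₀^∞ s²·((s+x²)(s+y²)(s+z²))^(−3/2) ds`. -/
noncomputable def riC2 (g x y z : ℝ) : ℝ :=
  2 * π * g * ∫ s in Set.Ioi (0:ℝ),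
    s ^ 2 * ((s + x ^ 2) * (s + y ^ 2) * (s + z ^ 2)) ^ (-(3:ℝ)/2)

/-- `G^S₊(x,y,z)`. -/
noncomputable def GSp (g x y z : ℝ) : ℝ :=
  ((x - z) ^ 4 / (x * z)) *
    ((x * y ^ 2 * z + (x ^ 2 * y ^ 2 - x ^ 2 * z ^ 2 + y ^ 2 * z ^ 2)) * riC1 g x y z
      + (x * z + y ^ 2) * riC2 g x y z)

/-- `G^S₋(x,y,z)`. -/
noncomputable def GSm (g x y z : ℝ) : ℝ :=
  ((x + z) ^ 4 / (x * z)) *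
    ((x * y ^ 2 * z - (x ^ 2 * y ^ 2 - x ^ 2 * z ^ 2 + y ^ 2 * z ^ 2)) * riC1 g x y z
      + (x * z - y ^ 2) * riC2 g x y z)

/-- `N^S₊(x,y,z) = ½(√G^S₊ + √G^S₋)`. -/
noncomputable def NSp (g x y z : ℝ) : ℝ :=
  (Real.sqrt (GSp g x y z) + Real.sqrt (GSm g x y z)) / 2

/-- `N^S₋(x,y,z) = ½(√G^S₊ − √G^S₋)`. -/
noncomputable def NSm (g x y z : ℝ) : ℝ :=
  (Real.sqrt (GSp g x y z) - Real.sqrt (GSm g x y z)) / 2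

/-- Membership in `B = {(b₁,b₂) : b₁ > b₂ > b₁^(−1/2) > 0}`. -/
def memB (b1 b2 : ℝ) : Prop := b2 < b1 ∧ (Real.sqrt b1)⁻¹ < b2 ∧ 0 < (Real.sqrt b1)⁻¹

/-- The reduced Hamiltonian `H(b₁,b₂,c₁,c₂,m₁,…,m₆)` of the Riemann ellipsoid problem,
as a function on `ℝ¹⁰` (coordinates `p 0 = b₁, p 1 = b₂, p 2 = c₁, p 3 = c₂,
p 4,…,p 9 = m₁,…,m₆`), with `b₃ = (b₁b₂)⁻¹`. -/
noncomputable def Hred (g : ℝ) (p : Fin 10 → ℝ) : ℝ :=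
  let b1 := p 0; let b2 := p 1; let c1 := p 2; let c2 := p 3
  let m1 := p 4; let m2 := p 5; let m3 := p 6
  let m4 := p 7; let m5 := p 8; let m6 := p 9
  let b3 := (b1 * b2)⁻¹
  ((b2 ^ 2 + b3 ^ 2) * b1 ^ 2 * c1 ^ 2 + (b1 ^ 2 + b3 ^ 2) * b2 ^ 2 * c2 ^ 2
        - 2 * b3 * c1 * c2) /
      (2 * (b1 ^ 2 * b2 ^ 2 + b1 ^ 2 * b3 ^ 2 + b2 ^ 2 * b3 ^ 2))
    + ((b1 ^ 2 + b2 ^ 2) * (m3 ^ 2 + m6 ^ 2) + 4 * b1 * b2 * m3 * m6) /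
        (2 * (b1 ^ 2 - b2 ^ 2) ^ 2)
    + ((b1 ^ 2 + b3 ^ 2) * (m2 ^ 2 + m5 ^ 2) + 4 * b1 * b3 * m2 * m5) /
        (2 * (b1 ^ 2 - b3 ^ 2) ^ 2)
    + ((b2 ^ 2 + b3 ^ 2) * (m1 ^ 2 + m4 ^ 2) + 4 * b2 * b3 * m1 * m4) /
        (2 * (b2 ^ 2 - b3 ^ 2) ^ 2)
    - 2 * π * g * ∫ s in Set.Ioi (0:ℝ),
        ((s + b1 ^ 2) * (s + b2 ^ 2) * (s + b3 ^ 2)) ^ (-(1:ℝ)/2)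

/-- Partial derivative `∂H/∂pᵢ`. -/
noncomputable def pd (g : ℝ) (i : Fin 10) (p : Fin 10 → ℝ) : ℝ :=
  fderiv ℝ (Hred g) p (Pi.single i 1)

/-- The reduced vector field: `b' = ∂H/∂c`, `c' = −∂H/∂b`, `η_l' = η_l × ∇_{η_l}H`,
`η_r' = η_r × ∇_{η_r}H`. -/
noncomputable def RVF (g : ℝ) (p : Fin 10 → ℝ) : Fin 10 → ℝ :=
  ![pd g 2 p, pd g 3 p, -pd g 0 p, -pd g 1 p,
    p 5 * pd g 6 p - p 6 * pd g 5 p,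
    p 6 * pd g 4 p - p 4 * pd g 6 p,
    p 4 * pd g 5 p - p 5 * pd g 4 p,
    p 8 * pd g 9 p - p 9 * pd g 8 p,
    p 9 * pd g 7 p - p 7 * pd g 9 p,
    p 7 * pd g 8 p - p 8 * pd g 7 p]

/-- `γ` is a solution of the reduced equations of motion on the set `s ⊂ ℝ`
(staying in the domain `B × ℝ² × ℝ³ × ℝ³`). -/
def IsSolution (g : ℝ) (γ : ℝ → Fin 10 → ℝ) (s : Set ℝ) : Prop :=
  ∀ t ∈ s, memB (γ t 0) (γ t 1) ∧
    ∀ i : Fin 10, HasDerivAt (fun τ => γ τ i) (RVF g (γ t) i) t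

/-- Liapunov stability of an equilibrium `pstar` relative to
`S_{L,R} = {(b,c,η_l,η_r) : ‖η_l‖ = L, ‖η_r‖ = R}`. -/
def LiapunovStable (g L R : ℝ) (pstar : Fin 10 → ℝ) : Prop :=
  ∀ ε > 0, ∃ δ > 0, ∀ (T : ℝ) (γ : ℝ → Fin 10 → ℝ),
    IsSolution g γ (Set.Ico 0 T) →
    Real.sqrt ((γ 0 4) ^ 2 + (γ 0 5) ^ 2 + (γ 0 6) ^ 2) = L →
    Real.sqrt ((γ 0 7) ^ 2 + (γ 0 8) ^ 2 + (γ 0 9) ^ 2) = R →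
    dist (γ 0) pstar < δ →
    ∀ t ∈ Set.Ico (0:ℝ) T, dist (γ t) pstar < ε

/-!
On `η_r = 0`, `N² ≤ ‖η_l‖²` the Hamiltonian is at least the effective potential
`N² / 4 * (p + q) - 2πg ∫₀^∞ D ^ (-1/2) ds`, `D = (s + b₁²) (s + b₂²) (s + b₃²)`, with equality only
for `c = 0`, `η_l = ± N e₂`. In the coordinates `p = (b₁ - b₃)⁻²`, `q = (b₁ + b₃)⁻²` the centrifugal
term is linear, and for each `s > 0` the function `D ^ (-1/2)` is strictly concave where
`b₃ < b₂ < b₁` and `b₂ < 2 b₃`; hence the effective potential is strictly convex there. The equation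
`G₊ = G₋` forces `b₂ < 2 b₃`, and `G₊ = G₋ = N²` says that `(b₁, b₂)` is a critical point. So `p*`
is a strict local minimum of the Hamiltonian on the set above. All partial derivatives that enter
the vector field at `p*` are along lines contained in this set, so they vanish and `p*` is an
equilibrium; stability follows from conservation of `H`, `‖η_l‖` and `‖η_r‖`.
-/

section Dynamics

theorem eq_of_forall_hasDerivAt_zero {E : Type*} [NormedAddCommGroup E] [NormedSpace ℝ E]
    {f : ℝ → E} {s : Set ℝ} (hs : s.OrdConnected) (hf : ∀ t ∈ s, HasDerivAt f 0 t) {x y : ℝ}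
    (hx : x ∈ s) (hy : y ∈ s) : f y = f x := by
  have h := hs.convex.norm_image_sub_le_of_norm_hasDerivWithin_le (C := 0)
    (fun t ht => (hf t ht).hasDerivWithinAt) (fun t _ => norm_zero.le) hx hy
  rwa [zero_mul, norm_le_zero_iff, sub_eq_zero] at h

variable {X : Type*} [PseudoMetricSpace X]

/- The minimum of `H` over `M ∩ sphere p ρ` is a barrier: a curve in `M` starting close to `p` has
too little energy to cross the sphere. -/
theorem exists_forall_dist_lt_of_eventually_lt [ProperSpace X] {M : Set X} (hM : IsClosed M)
    {H : X → ℝ} {p : X} (hcont : ∀ᶠ x in nhds p, ContinuousAt H x)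
    (hmin : ∀ᶠ x in nhds p, x ∈ M → x ≠ p → H p < H x) {ε : ℝ} (hε : 0 < ε) :
    ∃ δ > 0, ∀ (T : ℝ) (γ : ℝ → X), ContinuousOn γ (Set.Ico 0 T) →
      (∀ t ∈ Set.Ico 0 T, γ t ∈ M) → (∀ t ∈ Set.Ico 0 T, H (γ t) ≤ H (γ 0)) →
      dist (γ 0) p < δ → ∀ t ∈ Set.Ico 0 T, dist (γ t) p < ε := by
  obtain ⟨r, hr, hball⟩ := Metric.eventually_nhds_iff_ball.mp (hcont.and hmin)
  obtain ⟨ρ, hρ, hρ_lt⟩ := exists_between (lt_min hε hr)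
  obtain ⟨hρε, hρr⟩ := lt_min_iff.mp hρ_lt
  set K := Metric.sphere p ρ ∩ M
  have hK : IsCompact K := (isCompact_sphere p ρ).inter_right hM
  have hK_ball : ∀ x ∈ K, x ∈ Metric.ball p r := fun x hx => hx.1.trans_lt hρr
  obtain ⟨m, hm, hmK⟩ : ∃ m, H p < m ∧ ∀ x ∈ K, m ≤ H x := by
    rcases K.eq_empty_or_nonempty with hempty | hne
    · exact ⟨H p + 1, lt_add_one _, by simp [hempty]⟩
    · have hKcont : ContinuousOn H K := fun x hx =>
        (hball x (hK_ball x hx)).1.continuousWithinAt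
      obtain ⟨x, hx, hxmin⟩ := hK.exists_isMinOn hne hKcont
      have hxp : x ≠ p := Metric.ne_of_mem_sphere hx.1 hρ.ne'
      exact ⟨H x, (hball x (hK_ball x hx)).2 hx.2 hxp, fun y hy => hxmin hy⟩
  obtain ⟨δ, hδ, hδm⟩ := Metric.eventually_nhds_iff_ball.mp
    (hcont.self_of_nhds.eventually_lt_const hm)
  refine ⟨min δ ρ, lt_min hδ hρ, fun T γ hγ hγM hγH hγ0 t ht => ?_⟩
  obtain ⟨hγδ, hγρ⟩ := lt_min_iff.mp hγ0
  by_contra! hfar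
  have hsub : Set.Icc 0 t ⊆ Set.Ico 0 T := fun τ hτ => ⟨hτ.1, hτ.2.trans_lt ht.2⟩
  have hdist : ContinuousOn (fun τ => dist (γ τ) p) (Set.Icc 0 t) :=
    continuous_dist.comp_continuousOn ((hγ.mono hsub).prodMk continuousOn_const)
  obtain ⟨τ, hτ, hτρ⟩ := intermediate_value_Icc ht.1 hdist ⟨hγρ.le, hρε.le.trans hfar⟩
  have hτT := hsub hτ
  exact ((hmK _ ⟨hτρ, hγM τ hτT⟩).trans (hγH τ hτT)).not_gt (hδm _ hγδ)

end Dynamics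

section Convexity

variable {E : Type*} [AddCommGroup E] [Module ℝ E]

theorem convex_setOf_add_smul_mem {C : Set E} (hC : Convex ℝ C) (x v : E) :
    Convex ℝ {t : ℝ | x + t • v ∈ C} := by
  have h := hC.affine_preimage (AffineMap.lineMap x (x + v) : ℝ →ᵃ[ℝ] E)
  simpa [Set.preimage, AffineMap.lineMap_apply, add_comm] using h

theorem strictConcaveOn_of_forall_line {C : Set E} (hC : Convex ℝ C) {F : E → ℝ}
    (hF : ∀ x v, v ≠ 0 → StrictConcaveOn ℝ {t : ℝ | x + t • v ∈ C} fun t => F (x + t • v)) :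
    StrictConcaveOn ℝ C F := by
  refine ⟨hC, fun x hx y hy hxy a b ha hb hab => ?_⟩
  have h := (hF x (y - x) (sub_ne_zero.mpr hxy.symm)).2 (x := 0) (y := 1) (by simpa) (by simpa)
    zero_ne_one ha hb hab
  have hcomb : x + b • (y - x) = a • x + b • y := by
    rw [← sub_eq_of_eq_add hab.symm]; module
  simpa [hcomb] using h

theorem lt_of_strictConvexOn_of_hasLineDerivAt_zero {C : Set E} {F : E → ℝ}
    (hF : StrictConvexOn ℝ C F) {x y : E} (hx : x ∈ C) (hy : y ∈ C) (hxy : x ≠ y)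
    (h : HasLineDerivAt ℝ F 0 x (y - x)) : F x < F y := by
  have hline : StrictConvexOn ℝ (Set.Icc (0 : ℝ) 1) fun t => F (x + t • (y - x)) := by
    refine ⟨convex_Icc 0 1, fun s hs t ht hst a b ha hb hab => ?_⟩
    have hmem := fun u hu => hF.1.add_smul_sub_mem hx hy (t := u) hu
    have hne : x + s • (y - x) ≠ x + t • (y - x) := by
      simpa [sub_eq_zero, hxy.symm] using hst
    convert hF.2 (hmem s hs) (hmem t ht) hne ha hb hab using 2
    rw [← sub_eq_of_eq_add hab.symm, smul_eq_mul, smul_eq_mul]; module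
  have hslope := hline.lt_slope_of_hasDerivAt (by simp) (by simp) one_pos h
  simpa [slope_def_field] using hslope

/- The second derivative of `f ^ (-r)` is `r * f ^ (-r - 2) * ((r + 1) * f' ^ 2 - f * f'')`. -/
theorem strictConcaveOn_rpow_neg {S : Set ℝ} (hS : Convex ℝ S) {f f' f'' : ℝ → ℝ} {r : ℝ}
    (hr : 0 < r) (hpos : ∀ t ∈ S, 0 < f t) (hf : ∀ t ∈ S, HasDerivAt f (f' t) t)
    (hf' : ∀ t ∈ S, HasDerivAt f' (f'' t) t)
    (hlt : ∀ t ∈ S, (r + 1) * f' t ^ 2 < f t * f'' t) :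
    StrictConcaveOn ℝ S fun t => f t ^ (-r) := by
  have hd : ∀ t ∈ S, HasDerivAt (fun t => f t ^ (-r)) (f' t * -r * f t ^ (-r - 1)) t :=
    fun t ht => (hf t ht).rpow_const (Or.inl (hpos t ht).ne')
  have hd2 : ∀ t ∈ S, HasDerivAt (fun t => f' t * -r * f t ^ (-r - 1))
      (r * f t ^ (-r - 2) * ((r + 1) * f' t ^ 2 - f t * f'' t)) t := by
    intro t ht
    have hrpow : f t ^ (-r - 1) = f t ^ (-r - 2) * f t := by
      rw [← rpow_add_one (hpos t ht).ne']; ring_nf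
    refine (((hf' t ht).mul_const (-r)).mul
      ((hf t ht).rpow_const (p := -r - 1) (Or.inl (hpos t ht).ne'))).congr_deriv ?_
    rw [hrpow, show -r - 1 - 1 = -r - 2 by ring]
    ring
  have hneg : ∀ t ∈ S, r * f t ^ (-r - 2) * ((r + 1) * f' t ^ 2 - f t * f'' t) < 0 :=
    fun t ht => mul_neg_of_pos_of_neg (mul_pos hr (rpow_pos_of_pos (hpos t ht) _))
      (sub_neg.mpr (hlt t ht))
  refine StrictAntiOn.strictConcaveOn_of_deriv hS
    (fun t ht => (hd t ht).continuousAt.continuousWithinAt) ?_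
  have hanti := strictAntiOn_of_hasDerivWithinAt_neg hS.interior
    (fun t ht => (hd2 t (interior_subset ht)).continuousAt.continuousWithinAt)
    (fun t ht => (hd2 t (interior_subset (interior_subset ht))).hasDerivWithinAt)
    fun t ht => hneg t (interior_subset (interior_subset ht))
  exact hanti.congr fun t ht => (hd t (interior_subset ht)).deriv.symm

end Convexity

section IntegralOfFamily

variable {α E : Type*} [MeasurableSpace α] {μ : Measure α} [AddCommGroup E] [Module ℝ E]

theorem integral_pos_of_ae_pos (hμ : μ ≠ 0) {f : α → ℝ} (hfi : Integrable f μ)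
    (hf : ∀ᵐ a ∂μ, 0 < f a) : 0 < ∫ a, f a ∂μ := by
  rw [integral_pos_iff_support_of_nonneg_ae (hf.mono fun a ha => ha.le) hfi]
  have hsupp : Function.support f =ᵐ[μ] Set.univ :=
    Filter.eventuallyEq_univ.mpr (hf.mono fun a ha => ha.ne')
  rw [measure_congr hsupp]
  exact Measure.measure_univ_pos.mpr hμ

theorem strictConcaveOn_integral (hμ : μ ≠ 0) {C : Set E} (hC : Convex ℝ C) {F : E → α → ℝ}
    (hint : ∀ x ∈ C, Integrable (F x) μ)
    (hF : ∀ᵐ a ∂μ, StrictConcaveOn ℝ C fun x => F x a) :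
    StrictConcaveOn ℝ C fun x => ∫ a, F x a ∂μ := by
  refine ⟨hC, fun x hx y hy hxy a b ha hb hab => ?_⟩
  have hxy_int : Integrable (fun s => a • F x s + b • F y s) μ :=
    ((hint x hx).smul a).add ((hint y hy).smul b)
  have hcomb_int := hint _ (hC hx hy ha.le hb.le hab)
  calc a • ∫ s, F x s ∂μ + b • ∫ s, F y s ∂μ
      = ∫ s, (a • F x s + b • F y s) ∂μ := by
        simpa only [Pi.smul_apply, integral_smul] using
          (integral_add ((hint x hx).smul a) ((hint y hy).smul b)).symm
    _ < ∫ s, F (a • x + b • y) s ∂μ := by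
        rw [← sub_pos, ← integral_sub hcomb_int hxy_int]
        exact integral_pos_of_ae_pos hμ (hcomb_int.sub hxy_int)
          (hF.mono fun s hs => sub_pos.mpr (hs.2 hx hy hxy ha hb hab))

end IntegralOfFamily

section Moments

/-- The polynomial `(s + X) (s + Y) (s + Z)` with `X Y Z = 1`, in terms of the elementary symmetric
functions `v = (X + Y + Z, X Y + Y Z + X Z)`. -/
def cubic (v : ℝ × ℝ) (s : ℝ) : ℝ := s ^ 3 + v.1 * s ^ 2 + v.2 * s + 1

/-- The integrals `∫₀^∞ sᵏ ((s + X) (s + Y) (s + Z))ʳ ds` with `X Y Z = 1`, as functions of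
`v = (X + Y + Z, X Y + Y Z + X Z)`. The gravitational energy and `C₁`, `C₂` are of this form. -/
noncomputable def moment (k : ℕ) (r : ℝ) (v : ℝ × ℝ) : ℝ :=
  ∫ s in Set.Ioi (0 : ℝ), s ^ k * cubic v s ^ r

theorem mul_mul_eq_cubic {X Y Z : ℝ} (h : X * Y * Z = 1) (s : ℝ) :
    (s + X) * (s + Y) * (s + Z) = cubic (X + Y + Z, X * Y + Y * Z + X * Z) s := by
  unfold cubic; linear_combination h

variable {v : ℝ × ℝ} {s : ℝ}

theorem add_one_pow_three_div_four_le_cubic (hv : 0 ≤ v) (hs : 0 ≤ s) :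
    (s + 1) ^ 3 / 4 ≤ cubic v s := by
  have h1 : 0 ≤ v.1 * s ^ 2 := mul_nonneg hv.1 (sq_nonneg s)
  have h2 : 0 ≤ v.2 * s := mul_nonneg hv.2 hs
  have h3 : 0 ≤ (s + 1) * (s - 1) ^ 2 := by positivity
  unfold cubic; linarith

theorem cubic_pos (hv : 0 ≤ v) (hs : 0 ≤ s) : 0 < cubic v s :=
  lt_of_lt_of_le (by positivity) (add_one_pow_three_div_four_le_cubic hv hs)

theorem pow_mul_cubic_rpow_le {r : ℝ} (hr : r ≤ 0) (k : ℕ) (hv : 0 ≤ v) (hs : 0 ≤ s) :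
    s ^ k * cubic v s ^ r ≤ (1 / 4) ^ r * (s + 1) ^ (k + 3 * r) := by
  have hs1 : 0 < s + 1 := by positivity
  calc s ^ k * cubic v s ^ r ≤ (s + 1) ^ k * ((s + 1) ^ 3 / 4) ^ r := by
        have hpow : s ^ k ≤ (s + 1) ^ k := by gcongr; linarith
        exact mul_le_mul hpow (rpow_le_rpow_of_nonpos (by positivity)
          (add_one_pow_three_div_four_le_cubic hv hs) hr)
          (rpow_nonneg (cubic_pos hv hs).le r) (by positivity)
    _ = (1 / 4) ^ r * (s + 1) ^ (k + 3 * r) := by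
        rw [div_eq_mul_one_div, mul_rpow (by positivity) (by norm_num), rpow_add hs1,
          rpow_natCast, rpow_mul hs1.le, ← rpow_natCast (s + 1) 3]
        push_cast; ring

theorem integrableOn_add_one_rpow {p : ℝ} (hp : p < -1) :
    IntegrableOn (fun s : ℝ => (s + 1) ^ p) (Set.Ioi 0) :=
  integrableOn_add_rpow_Ioi_of_lt hp (by norm_num)

theorem aestronglyMeasurable_pow_mul_cubic_rpow (k : ℕ) (r : ℝ) (v : ℝ × ℝ) :
    AEStronglyMeasurable (fun s => s ^ k * cubic v s ^ r) (volume.restrict (Set.Ioi 0)) := by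
  unfold cubic; exact Measurable.aestronglyMeasurable (by fun_prop)

theorem integrableOn_pow_mul_cubic_rpow {k : ℕ} {r : ℝ} (hkr : k + 3 * r < -1) (hv : 0 ≤ v) :
    IntegrableOn (fun s => s ^ k * cubic v s ^ r) (Set.Ioi 0) := by
  have hr : r ≤ 0 := by linarith [k.cast_nonneg (α := ℝ)]
  refine ((integrableOn_add_one_rpow hkr).const_mul ((1 / 4) ^ r)).mono'
    (aestronglyMeasurable_pow_mul_cubic_rpow k r v) ?_
  filter_upwards [ae_restrict_mem measurableSet_Ioi] with s (hs : 0 < s)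
  have hc := cubic_pos hv hs.le
  rw [norm_of_nonneg (by positivity)]
  exact pow_mul_cubic_rpow_le hr k hv hs.le

theorem moment_pos {k : ℕ} {r : ℝ} (hkr : k + 3 * r < -1) (hv : 0 ≤ v) : 0 < moment k r v := by
  refine integral_pos_of_ae_pos (by simp) (integrableOn_pow_mul_cubic_rpow hkr hv) ?_
  filter_upwards [ae_restrict_mem measurableSet_Ioi] with s (hs : 0 < s)
  have hc := cubic_pos hv hs.le
  positivity

theorem hasFDerivAt_pow_mul_cubic_rpow (k : ℕ) (r : ℝ) (hv : 0 ≤ v) (hs : 0 ≤ s) :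
    HasFDerivAt (fun v => s ^ k * cubic v s ^ r)
      (r • ((s ^ (k + 2) * cubic v s ^ (r - 1)) • ContinuousLinearMap.fst ℝ ℝ ℝ +
        (s ^ (k + 1) * cubic v s ^ (r - 1)) • ContinuousLinearMap.snd ℝ ℝ ℝ)) v := by
  have hcubic : HasFDerivAt (fun v => cubic v s)
      (s ^ 2 • ContinuousLinearMap.fst ℝ ℝ ℝ + s • ContinuousLinearMap.snd ℝ ℝ ℝ) v :=
    (((hasFDerivAt_fst.mul_const (s ^ 2)).const_add (s ^ 3)).add
      (hasFDerivAt_snd.mul_const s)).add_const 1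
  refine ((hcubic.rpow_const (Or.inl (cubic_pos hv hs).ne')).const_mul (s ^ k)).congr_fderiv ?_
  module

theorem norm_smul_fst_add_smul_snd_le (a b : ℝ) :
    ‖a • ContinuousLinearMap.fst ℝ ℝ ℝ + b • ContinuousLinearMap.snd ℝ ℝ ℝ‖ ≤ |a| + |b| := by
  refine (norm_add_le _ _).trans (add_le_add ?_ ?_) <;> rw [norm_smul, norm_eq_abs]
  · exact mul_le_of_le_one_right (abs_nonneg a) (ContinuousLinearMap.norm_fst_le ..)
  · exact mul_le_of_le_one_right (abs_nonneg b) (ContinuousLinearMap.norm_snd_le ..)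

/- The derivative of the integrand is dominated on the whole quadrant `0 ≤ v`. -/
theorem hasFDerivAt_moment {k : ℕ} {r : ℝ} (hkr : k + 3 * r < -1) (hv1 : 0 < v.1)
    (hv2 : 0 < v.2) :
    HasFDerivAt (moment k r)
      (r • (moment (k + 2) (r - 1) v • ContinuousLinearMap.fst ℝ ℝ ℝ +
        moment (k + 1) (r - 1) v • ContinuousLinearMap.snd ℝ ℝ ℝ)) v := by
  have hr : r - 1 ≤ 0 := by linarith [k.cast_nonneg (α := ℝ)]
  have hkr2 : ((k + 2 : ℕ) : ℝ) + 3 * (r - 1) < -1 := by push_cast; linarith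
  have hkr1 : ((k + 1 : ℕ) : ℝ) + 3 * (r - 1) < -1 := by push_cast; linarith
  have hv : 0 ≤ v := ⟨hv1.le, hv2.le⟩
  have hnhds : Set.Ici 0 ∈ nhds v := by
    filter_upwards [continuousAt_fst.eventually (lt_mem_nhds hv1),
      continuousAt_snd.eventually (lt_mem_nhds hv2)] with w h1 h2 using ⟨h1.le, h2.le⟩
  have hint2 := (integrableOn_pow_mul_cubic_rpow hkr2 hv).smul_const
    (ContinuousLinearMap.fst ℝ ℝ ℝ)
  have hint1 := (integrableOn_pow_mul_cubic_rpow hkr1 hv).smul_const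
    (ContinuousLinearMap.snd ℝ ℝ ℝ)
  have hbound := ((((integrableOn_add_one_rpow hkr2).const_mul ((1 / 4) ^ (r - 1))).add
    ((integrableOn_add_one_rpow hkr1).const_mul ((1 / 4) ^ (r - 1)))).const_mul |r|)
  have hderiv := hasFDerivAt_integral_of_dominated_of_fderiv_le hnhds
    (.of_forall fun w => aestronglyMeasurable_pow_mul_cubic_rpow k r w)
    (integrableOn_pow_mul_cubic_rpow hkr hv) ((hint2.add hint1).smul r).aestronglyMeasurable
    ((ae_restrict_mem measurableSet_Ioi).mono fun s (hs : 0 < s) w hw => ?_) hbound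
    ((ae_restrict_mem measurableSet_Ioi).mono fun s (hs : 0 < s) w hw =>
      hasFDerivAt_pow_mul_cubic_rpow k r hw hs.le)
  · simp only [integral_smul, integral_add hint2 hint1, integral_smul_const] at hderiv
    exact hderiv
  · have hc := cubic_pos hw hs.le
    rw [norm_smul, norm_eq_abs]
    refine mul_le_mul_of_nonneg_left ((norm_smul_fst_add_smul_snd_le _ _).trans ?_) (abs_nonneg r)
    rw [abs_of_nonneg (by positivity), abs_of_nonneg (by positivity)]
    exact add_le_add (pow_mul_cubic_rpow_le hr _ hw hs.le) (pow_mul_cubic_rpow_le hr _ hw hs.le)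

end Moments

section SecondVariation

theorem quadratic_form_nonneg {A B C : ℝ} (hA : 0 ≤ A) (hC : 0 ≤ C) (hdisc : B ^ 2 ≤ A * C)
    (x y : ℝ) : 0 ≤ A * x ^ 2 + 2 * B * x * y + C * y ^ 2 := by
  rcases hA.eq_or_lt with rfl | hA
  · obtain rfl : B = 0 := by nlinarith
    linarith [mul_nonneg hC (sq_nonneg y)]
  · refine nonneg_of_mul_nonneg_right ?_ hA
    calc 0 ≤ (A * x + B * y) ^ 2 + (A * C - B ^ 2) * y ^ 2 :=
          add_nonneg (sq_nonneg _) (mul_nonneg (sub_nonneg.mpr hdisc) (sq_nonneg y))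
      _ = A * (A * x ^ 2 + 2 * B * x * y + C * y ^ 2) := by ring

/-- The velocity of `X + Y + Z` when the semi-axes `√X` and `√Z` have logarithmic velocities `m`
and `n` and the volume is fixed, so that `√Y` has logarithmic velocity `-(m + n)`. -/
def sumVel (X Y Z m n : ℝ) : ℝ := 2 * (X * m + Z * n) - 2 * Y * (m + n)

/-- The velocity of `X Y + Y Z + X Z` in the situation of `sumVel`. -/
def pairVel (X Y Z m n : ℝ) : ℝ := 2 * X * Z * (m + n) - 2 * X * Y * n - 2 * Y * Z * m

/-- The acceleration of `X + Y + Z` in the situation of `sumVel`, along lines in the coordinates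
`shapeCoord` introduced below. -/
def sumAcc (X Y Z m n : ℝ) : ℝ :=
  8 * X * m ^ 2 + 8 * Z * n ^ 2 + Y * (6 * m ^ 2 - 4 * m * n + 6 * n ^ 2)

/-- The acceleration of `X Y + Y Z + X Z` in the situation of `sumAcc`. -/
def pairAcc (X Y Z m n : ℝ) : ℝ :=
  X * Z * (2 * m ^ 2 + 20 * m * n + 2 * n ^ 2) + 6 * Y * (X + Z) * (m - n) ^ 2

variable {X Y Z : ℝ}

/- In the variables `k, v, w` all discriminants below are polynomials with nonnegative
coefficients. -/
theorem exists_nonneg_parametrization (hZY : Z ≤ Y) (hYX : Y ≤ X)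
    (hY4 : Y ≤ 4 * Z) : ∃ k v w : ℝ, 0 ≤ k ∧ 0 ≤ v ∧ 0 ≤ w ∧
      X = 4 * k + v + w ∧ Y = 4 * k + v ∧ Z = k + v :=
  ⟨(Y - Z) / 3, Z - (Y - Z) / 3, X - Y, by linarith, by linarith, by linarith, by ring, by ring,
    by ring⟩

theorem sumAcc_pos {m n : ℝ} (hX : 0 ≤ X) (hY : 0 < Y) (hZ : 0 ≤ Z) (hmn : ¬(m = 0 ∧ n = 0)) :
    0 < sumAcc X Y Z m n := by
  have hpos : 0 < m ^ 2 + n ^ 2 := by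
    rcases not_and_or.mp hmn with h | h <;> positivity
  have hYpos : 0 < Y * (6 * m ^ 2 - 4 * m * n + 6 * n ^ 2) :=
    mul_pos hY (by linarith [sq_nonneg (m - n)])
  unfold sumAcc; positivity

theorem pairAcc_nonneg (hZY : Z ≤ Y) (hYX : Y ≤ X) (hY4 : Y ≤ 4 * Z)
    (m n : ℝ) : 0 ≤ pairAcc X Y Z m n := by
  obtain ⟨k, v, w, hk, hv, hw, rfl, rfl, rfl⟩ := exists_nonneg_parametrization hZY hYX hY4
  set X := 4 * k + v + w with hX
  set Y := 4 * k + v with hY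
  set Z := k + v with hZ
  have h := quadratic_form_nonneg (A := 6 * X * Y + 2 * X * Z + 6 * Y * Z)
    (B := -6 * X * Y + 10 * X * Z - 6 * Y * Z) (C := 6 * X * Y + 2 * X * Z + 6 * Y * Z)
    (by positivity) (by positivity)
    (by rw [← sub_nonneg, hX, hY, hZ]; ring_nf; positivity) m n
  unfold pairAcc; linarith

theorem three_halves_sumVel_sq_le (hZY : Z ≤ Y) (hYX : Y ≤ X) (hY4 : Y ≤ 4 * Z)
    (m n : ℝ) : 3 / 2 * sumVel X Y Z m n ^ 2 ≤
      pairAcc X Y Z m n + (X + Y + Z) * sumAcc X Y Z m n := by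
  obtain ⟨k, v, w, hk, hv, hw, rfl, rfl, rfl⟩ := exists_nonneg_parametrization hZY hYX hY4
  set X := 4 * k + v + w with hX
  set Y := 4 * k + v with hY
  set Z := k + v with hZ
  have h := quadratic_form_nonneg (A := 2 * X ^ 2 + 32 * X * Y + 10 * X * Z + 12 * Y * Z)
    (B := -2 * X * Y + 4 * X * Z - 8 * Y ^ 2 - 2 * Y * Z)
    (C := 12 * X * Y + 10 * X * Z + 32 * Y * Z + 2 * Z ^ 2) (by positivity) (by positivity)
    (by rw [← sub_nonneg, hX, hY, hZ]; ring_nf; positivity) m n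
  unfold sumVel sumAcc pairAcc; linarith

theorem three_mul_sumVel_mul_pairVel_le (hZY : Z ≤ Y) (hYX : Y ≤ X)
    (hY4 : Y ≤ 4 * Z) (m n : ℝ) : 3 * (sumVel X Y Z m n * pairVel X Y Z m n) ≤
      (X + Y + Z) * pairAcc X Y Z m n + (X * Y + Y * Z + X * Z) * sumAcc X Y Z m n := by
  obtain ⟨k, v, w, hk, hv, hw, rfl, rfl, rfl⟩ := exists_nonneg_parametrization hZY hYX hY4
  set X := 4 * k + v + w with hX
  set Y := 4 * k + v with hY
  set Z := k + v with hZ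
  have h := quadratic_form_nonneg
    (A := 14 * X ^ 2 * Y - 2 * X ^ 2 * Z + 12 * X * Y ^ 2 + 52 * X * Y * Z + 2 * X * Z ^ 2
      + 6 * Y * Z ^ 2)
    (B := 4 * X ^ 2 * Z - 14 * X * Y ^ 2 + 8 * X * Y * Z + 4 * X * Z ^ 2 - 14 * Y ^ 2 * Z)
    (C := 6 * X ^ 2 * Y + 2 * X ^ 2 * Z + 52 * X * Y * Z - 2 * X * Z ^ 2 + 12 * Y ^ 2 * Z
      + 14 * Y * Z ^ 2)
    (by rw [hX, hY, hZ]; ring_nf; positivity) (by rw [hX, hY, hZ]; ring_nf; positivity)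
    (by rw [← sub_nonneg, hX, hY, hZ]; ring_nf; positivity) m n
  unfold sumVel pairVel sumAcc pairAcc; linarith

theorem three_halves_pairVel_sq_le (hZY : Z ≤ Y) (hYX : Y ≤ X) (hY4 : Y ≤ 4 * Z)
    (m n : ℝ) : 3 / 2 * pairVel X Y Z m n ^ 2 ≤
      (X * Y + Y * Z + X * Z) * pairAcc X Y Z m n + X * Y * Z * sumAcc X Y Z m n := by
  obtain ⟨k, v, w, hk, hv, hw, rfl, rfl, rfl⟩ := exists_nonneg_parametrization hZY hYX hY4
  set X := 4 * k + v + w with hX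
  set Y := 4 * k + v with hY
  set Z := k + v with hZ
  have h := quadratic_form_nonneg
    (A := 6 * X ^ 2 * Y ^ 2 + 16 * X ^ 2 * Y * Z - 4 * X ^ 2 * Z ^ 2 + 18 * X * Y ^ 2 * Z
      + 20 * X * Y * Z ^ 2)
    (B := -6 * X ^ 2 * Y ^ 2 + 10 * X ^ 2 * Y * Z + 4 * X ^ 2 * Z ^ 2 - 20 * X * Y ^ 2 * Z
      + 10 * X * Y * Z ^ 2 - 6 * Y ^ 2 * Z ^ 2)
    (C := 20 * X ^ 2 * Y * Z - 4 * X ^ 2 * Z ^ 2 + 18 * X * Y ^ 2 * Z + 16 * X * Y * Z ^ 2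
      + 6 * Y ^ 2 * Z ^ 2)
    (by rw [hX, hY, hZ]; ring_nf; positivity) (by rw [hX, hY, hZ]; ring_nf; positivity)
    (by rw [← sub_nonneg, hX, hY, hZ]; ring_nf; positivity) m n
  unfold pairVel sumAcc pairAcc; linarith

/- The difference of the two sides, divided by `s`, is a polynomial in `s` whose coefficients are
estimated one by one in the preceding lemmas. -/
theorem three_halves_cubicVel_sq_lt {s m n : ℝ} (hs : 0 < s) (hZ : 0 < Z) (hZY : Z ≤ Y)
    (hYX : Y ≤ X) (hY4 : Y ≤ 4 * Z) (hmn : ¬(m = 0 ∧ n = 0)) :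
    3 / 2 * (sumVel X Y Z m n * s ^ 2 + pairVel X Y Z m n * s) ^ 2 <
      (s + X) * (s + Y) * (s + Z) * (sumAcc X Y Z m n * s ^ 2 + pairAcc X Y Z m n * s) := by
  have hY : 0 < Y := hZ.trans_le hZY
  have hX : 0 < X := hY.trans_le hYX
  have h4 := mul_pos (pow_pos hs 5) (sumAcc_pos hX.le hY hZ.le hmn)
  have h3 := mul_le_mul_of_nonneg_left (three_halves_sumVel_sq_le hZY hYX hY4 m n)
    (pow_pos hs 4).le
  have h2 := mul_le_mul_of_nonneg_left (three_mul_sumVel_mul_pairVel_le hZY hYX hY4 m n)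
    (pow_pos hs 3).le
  have h1 := mul_le_mul_of_nonneg_left (three_halves_pairVel_sq_le hZY hYX hY4 m n)
    (pow_pos hs 2).le
  have h0 := mul_nonneg (by positivity : 0 ≤ X * Y * Z * s)
    (pairAcc_nonneg hZY hYX hY4 m n)
  linarith

end SecondVariation

section ShapeMotion

/-- The squared semi-axes `X, Y, Z` of an ellipsoid with `X Y Z = 1` move along a straight line in
the coordinates `shapeCoord` below, the semi-axes `√X` and `√Z` having logarithmic velocities `m`
and `n`. The last two fields are the equation of straight lines, written in terms of `m` and `n`. -/
structure IsShapeMotionAt (X Y Z m n : ℝ → ℝ) (t : ℝ) : Prop where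
  ne : X t ≠ Z t
  hasDerivAt_X : HasDerivAt X (2 * X t * m t) t
  hasDerivAt_Y : HasDerivAt Y (-2 * Y t * (m t + n t)) t
  hasDerivAt_Z : HasDerivAt Z (2 * Z t * n t) t
  hasDerivAt_m : HasDerivAt m
    (3 * (X t * m t ^ 2 + Z t * n t ^ 2 - 2 * Z t * m t * n t) / (X t - Z t) - m t ^ 2) t
  hasDerivAt_n : HasDerivAt n
    (-3 * (X t * m t ^ 2 + Z t * n t ^ 2 - 2 * X t * m t * n t) / (X t - Z t) - n t ^ 2) t

namespace IsShapeMotionAt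

variable {X Y Z m n : ℝ → ℝ} {t : ℝ}

theorem hasDerivAt_sum (h : IsShapeMotionAt X Y Z m n t) :
    HasDerivAt (fun t => X t + Y t + Z t) (sumVel (X t) (Y t) (Z t) (m t) (n t)) t := by
  refine HasDerivAt.congr_deriv ((h.hasDerivAt_X.add h.hasDerivAt_Y).add h.hasDerivAt_Z) ?_
  unfold sumVel; ring

theorem hasDerivAt_pair (h : IsShapeMotionAt X Y Z m n t) :
    HasDerivAt (fun t => X t * Y t + Y t * Z t + X t * Z t)
      (pairVel (X t) (Y t) (Z t) (m t) (n t)) t := by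
  refine HasDerivAt.congr_deriv (((h.hasDerivAt_X.mul h.hasDerivAt_Y).add
    (h.hasDerivAt_Y.mul h.hasDerivAt_Z)).add (h.hasDerivAt_X.mul h.hasDerivAt_Z)) ?_
  unfold pairVel; ring

theorem hasDerivAt_sumVel (h : IsShapeMotionAt X Y Z m n t) :
    HasDerivAt (fun t => sumVel (X t) (Y t) (Z t) (m t) (n t))
      (sumAcc (X t) (Y t) (Z t) (m t) (n t)) t := by
  have hXZ := sub_ne_zero.mpr h.ne
  refine HasDerivAt.congr_deriv ((((h.hasDerivAt_X.mul h.hasDerivAt_m).add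
    (h.hasDerivAt_Z.mul h.hasDerivAt_n)).const_mul 2).sub
    ((h.hasDerivAt_Y.const_mul 2).mul (h.hasDerivAt_m.add h.hasDerivAt_n))) ?_
  unfold sumAcc; field_simp; ring

theorem hasDerivAt_pairVel (h : IsShapeMotionAt X Y Z m n t) :
    HasDerivAt (fun t => pairVel (X t) (Y t) (Z t) (m t) (n t))
      (pairAcc (X t) (Y t) (Z t) (m t) (n t)) t := by
  have hXZ := sub_ne_zero.mpr h.ne
  have hX2 := h.hasDerivAt_X.const_mul 2
  refine HasDerivAt.congr_deriv ((((hX2.mul h.hasDerivAt_Z).mul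
    (h.hasDerivAt_m.add h.hasDerivAt_n)).sub
    ((hX2.mul h.hasDerivAt_Y).mul h.hasDerivAt_n)).sub
    (((h.hasDerivAt_Y.const_mul 2).mul h.hasDerivAt_Z).mul h.hasDerivAt_m)) ?_
  unfold pairAcc; simp only [Pi.add_apply, Pi.mul_apply]; field_simp; ring

end IsShapeMotionAt

end ShapeMotion

section ShapeCoordinates

/-- Coordinates on the space of ellipsoids with semi-axes `a > (a z)⁻¹ > z`, in which the
centrifugal energy of a rotation about the middle axis is linear. -/
noncomputable def shapeCoord (a z : ℝ) : ℝ × ℝ := (((a - z) ^ 2)⁻¹, ((a + z) ^ 2)⁻¹)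

/-- The largest semi-axis `a` as a function of `v = shapeCoord a z`. -/
noncomputable def major (v : ℝ × ℝ) : ℝ := ((√v.1)⁻¹ + (√v.2)⁻¹) / 2

/-- The smallest semi-axis `z` as a function of `v = shapeCoord a z`. -/
noncomputable def minor (v : ℝ × ℝ) : ℝ := ((√v.2)⁻¹ - (√v.1)⁻¹) / 2

/-- The middle semi-axis as a function of `v = shapeCoord a z`, the volume being fixed. -/
noncomputable def middle (v : ℝ × ℝ) : ℝ := (major v * minor v)⁻¹

/-- The elementary symmetric functions of the squared semi-axes, as functions of `shapeCoord`. -/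
noncomputable def axesEsymm (v : ℝ × ℝ) : ℝ × ℝ :=
  (major v ^ 2 + middle v ^ 2 + minor v ^ 2,
    major v ^ 2 * middle v ^ 2 + middle v ^ 2 * minor v ^ 2 + major v ^ 2 * minor v ^ 2)

/-- The logarithmic velocity of `major` at `v` in the direction `d`. -/
noncomputable def majorRate (d v : ℝ × ℝ) : ℝ :=
  -(d.1 * (√v.1)⁻¹ ^ 3 + d.2 * (√v.2)⁻¹ ^ 3) / (4 * major v)

/-- The logarithmic velocity of `minor` at `v` in the direction `d`. -/
noncomputable def minorRate (d v : ℝ × ℝ) : ℝ :=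
  (d.1 * (√v.1)⁻¹ ^ 3 - d.2 * (√v.2)⁻¹ ^ 3) / (4 * minor v)

/-- The shapes with semi-axes `a > b > z > 0`, where `a = major v`, `b = middle v` and
`z = minor v`. -/
def shapeDomain : Set (ℝ × ℝ) :=
  {v | 0 < v.1 ∧ 0 < v.2 ∧ 0 < minor v ∧ minor v < middle v ∧ middle v < major v}

/-- The shapes with semi-axes `a > b > z > 0` and `b < 2 z`, on which the gravitational energy is
shown to be convex. -/
def convexityRegion : Set (ℝ × ℝ) := {v ∈ shapeDomain | middle v < 2 * minor v}

theorem inv_sqrt_inv_sq {u : ℝ} (hu : 0 ≤ u) : (√(u ^ 2)⁻¹)⁻¹ = u := by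
  rw [sqrt_inv, inv_inv, sqrt_sq hu]

variable {a z : ℝ}

theorem major_shapeCoord (hz : 0 < z) (hza : z < a) : major (shapeCoord a z) = a := by
  simp only [major, shapeCoord]
  rw [inv_sqrt_inv_sq (by linarith), inv_sqrt_inv_sq (by linarith)]; ring

theorem minor_shapeCoord (hz : 0 < z) (hza : z < a) : minor (shapeCoord a z) = z := by
  simp only [minor, shapeCoord]
  rw [inv_sqrt_inv_sq (by linarith), inv_sqrt_inv_sq (by linarith)]; ring

variable {v d : ℝ × ℝ}

theorem major_pos (h1 : 0 < v.1) (h2 : 0 < v.2) : 0 < major v := by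
  unfold major; positivity

theorem major_sq_sub_minor_sq (v : ℝ × ℝ) :
    major v ^ 2 - minor v ^ 2 = (√v.1)⁻¹ * (√v.2)⁻¹ := by
  unfold major minor; ring

theorem continuousAt_major (h1 : 0 < v.1) (h2 : 0 < v.2) : ContinuousAt major v := by
  have := (sqrt_pos.mpr h1).ne'
  have := (sqrt_pos.mpr h2).ne'
  unfold major; fun_prop (disch := assumption)

theorem continuousAt_minor (h1 : 0 < v.1) (h2 : 0 < v.2) : ContinuousAt minor v := by
  have := (sqrt_pos.mpr h1).ne'
  have := (sqrt_pos.mpr h2).ne'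
  unfold minor; fun_prop (disch := assumption)

theorem convexityRegion_mem_nhds (hv : v ∈ convexityRegion) : convexityRegion ∈ nhds v := by
  obtain ⟨⟨h1, h2, hz, hzb, hba⟩, hb⟩ := hv
  have hcz := continuousAt_minor h1 h2
  have hca := continuousAt_major h1 h2
  have hcb : ContinuousAt middle v :=
    (hca.mul hcz).inv₀ (mul_pos (major_pos h1 h2) hz).ne'
  filter_upwards [continuousAt_fst.eventually (lt_mem_nhds h1),
    continuousAt_snd.eventually (lt_mem_nhds h2), continuousAt_const.eventually_lt hcz hz,
    hcz.eventually_lt hcb hzb, hcb.eventually_lt hca hba,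
    hcb.eventually_lt (hcz.const_mul 2) hb] with w h1 h2 hz hzb hba hb
  exact ⟨⟨h1, h2, hz, hzb, hba⟩, hb⟩

section Motion

variable {c : ℝ → ℝ × ℝ} {t : ℝ}

theorem hasDerivAt_inv_sqrt {f : ℝ → ℝ} {f' : ℝ} (hf : HasDerivAt f f' t) (hpos : 0 < f t) :
    HasDerivAt (fun t => (√(f t))⁻¹) (-f' * (√(f t))⁻¹ ^ 3 / 2) t := by
  have hs := sqrt_pos.mpr hpos
  refine HasDerivAt.congr_deriv ((hf.sqrt hpos.ne').inv hs.ne') ?_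
  field_simp

theorem hasDerivAt_major (hc : HasDerivAt c d t) (h1 : 0 < (c t).1) (h2 : 0 < (c t).2) :
    HasDerivAt (fun t => major (c t)) (major (c t) * majorRate d (c t)) t := by
  have hM := (major_pos h1 h2).ne'
  refine HasDerivAt.congr_deriv (((hasDerivAt_inv_sqrt hc.fst h1).add
    (hasDerivAt_inv_sqrt hc.snd h2)).div_const 2) ?_
  unfold majorRate; field_simp; ring

theorem hasDerivAt_minor (hc : HasDerivAt c d t) (h1 : 0 < (c t).1) (h2 : 0 < (c t).2)
    (hm : minor (c t) ≠ 0) :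
    HasDerivAt (fun t => minor (c t)) (minor (c t) * minorRate d (c t)) t := by
  refine HasDerivAt.congr_deriv (((hasDerivAt_inv_sqrt hc.snd h2).sub
    (hasDerivAt_inv_sqrt hc.fst h1)).div_const 2) ?_
  unfold minorRate; field_simp; ring

theorem hasDerivAt_middle (hc : HasDerivAt c d t) (h1 : 0 < (c t).1) (h2 : 0 < (c t).2)
    (hm : minor (c t) ≠ 0) : HasDerivAt (fun t => middle (c t))
      (-middle (c t) * (majorRate d (c t) + minorRate d (c t))) t := by
  have hM := (major_pos h1 h2).ne'
  refine HasDerivAt.congr_deriv (((hasDerivAt_major hc h1 h2).mul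
    (hasDerivAt_minor hc h1 h2 hm)).inv (mul_ne_zero hM hm)) ?_
  simp only [middle, Pi.mul_apply]; field_simp

theorem hasDerivAt_majorRate (hc : HasDerivAt c d t) (h1 : 0 < (c t).1) (h2 : 0 < (c t).2)
    (hm : minor (c t) ≠ 0) : HasDerivAt (fun t => majorRate d (c t))
      (3 * (major (c t) ^ 2 * majorRate d (c t) ^ 2 + minor (c t) ^ 2 * minorRate d (c t) ^ 2 -
        2 * minor (c t) ^ 2 * majorRate d (c t) * minorRate d (c t)) /
          (major (c t) ^ 2 - minor (c t) ^ 2) - majorRate d (c t) ^ 2) t := by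
  have hM := (major_pos h1 h2).ne'
  refine HasDerivAt.congr_deriv ((((hasDerivAt_inv_sqrt hc.fst h1).pow 3).const_mul d.1).add
    (((hasDerivAt_inv_sqrt hc.snd h2).pow 3).const_mul d.2) |>.neg.div
    ((hasDerivAt_major hc h1 h2).const_mul 4) (mul_ne_zero four_ne_zero hM)) ?_
  have hu : (√(c t).1)⁻¹ ≠ 0 := by positivity
  have hw : (√(c t).2)⁻¹ ≠ 0 := by positivity
  rw [major_sq_sub_minor_sq]
  simp only [majorRate, minorRate, Pi.neg_apply, Pi.add_apply, Pi.pow_apply]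
  simp only [major, minor, div_ne_zero_iff] at hM hm ⊢
  generalize (√(c t).1)⁻¹ = u at *
  generalize (√(c t).2)⁻¹ = w at *
  replace hM := hM.1
  replace hm := hm.1
  field_simp
  ring

theorem hasDerivAt_minorRate (hc : HasDerivAt c d t) (h1 : 0 < (c t).1) (h2 : 0 < (c t).2)
    (hm : minor (c t) ≠ 0) : HasDerivAt (fun t => minorRate d (c t))
      (-3 * (major (c t) ^ 2 * majorRate d (c t) ^ 2 + minor (c t) ^ 2 * minorRate d (c t) ^ 2 -
        2 * major (c t) ^ 2 * majorRate d (c t) * minorRate d (c t)) /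
          (major (c t) ^ 2 - minor (c t) ^ 2) - minorRate d (c t) ^ 2) t := by
  have hM := (major_pos h1 h2).ne'
  refine HasDerivAt.congr_deriv ((((hasDerivAt_inv_sqrt hc.fst h1).pow 3).const_mul d.1).sub
    (((hasDerivAt_inv_sqrt hc.snd h2).pow 3).const_mul d.2) |>.div
    ((hasDerivAt_minor hc h1 h2 hm).const_mul 4) (mul_ne_zero four_ne_zero hm)) ?_
  have hu : (√(c t).1)⁻¹ ≠ 0 := by positivity
  have hw : (√(c t).2)⁻¹ ≠ 0 := by positivity
  rw [major_sq_sub_minor_sq]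
  simp only [majorRate, minorRate, Pi.sub_apply, Pi.pow_apply]
  simp only [major, minor, div_ne_zero_iff] at hM hm ⊢
  generalize (√(c t).1)⁻¹ = u at *
  generalize (√(c t).2)⁻¹ = w at *
  replace hM := hM.1
  replace hm := hm.1
  field_simp
  ring

theorem isShapeMotionAt (hc : HasDerivAt c d t) (hct : c t ∈ shapeDomain) :
    IsShapeMotionAt (fun t => major (c t) ^ 2) (fun t => middle (c t) ^ 2)
      (fun t => minor (c t) ^ 2) (fun t => majorRate d (c t)) (fun t => minorRate d (c t)) t := by
  obtain ⟨h1, h2, hz, hzb, hba⟩ := hct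
  have hzne := hz.ne'
  exact
    { ne := (pow_lt_pow_left₀ (hzb.trans hba) hz.le two_ne_zero).ne'
      hasDerivAt_X := ((hasDerivAt_major hc h1 h2).pow 2).congr_deriv (by push_cast; ring)
      hasDerivAt_Y := ((hasDerivAt_middle hc h1 h2 hzne).pow 2).congr_deriv (by push_cast; ring)
      hasDerivAt_Z := ((hasDerivAt_minor hc h1 h2 hzne).pow 2).congr_deriv (by push_cast; ring)
      hasDerivAt_m := hasDerivAt_majorRate hc h1 h2 hzne
      hasDerivAt_n := hasDerivAt_minorRate hc h1 h2 hzne }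

end Motion

theorem eq_zero_of_rates_eq_zero (hv : v ∈ shapeDomain)
    (h : majorRate d v = 0 ∧ minorRate d v = 0) : d = 0 := by
  obtain ⟨h1, h2, hz, -⟩ := hv
  have hu : 0 < (√v.1)⁻¹ ^ 3 := by positivity
  have hw : 0 < (√v.2)⁻¹ ^ 3 := by positivity
  have hM := major_pos h1 h2
  simp only [majorRate, minorRate, div_eq_zero_iff, mul_eq_zero, four_ne_zero, hM.ne', hz.ne',
    or_false] at h
  have hd1 : d.1 * (√v.1)⁻¹ ^ 3 = 0 := by linarith
  have hd2 : d.2 * (√v.2)⁻¹ ^ 3 = 0 := by linarith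
  exact Prod.ext ((mul_eq_zero_iff_right hu.ne').mp hd1) ((mul_eq_zero_iff_right hw.ne').mp hd2)

theorem axesEsymm_nonneg (v : ℝ × ℝ) : 0 ≤ axesEsymm v :=
  ⟨by unfold axesEsymm; positivity, by unfold axesEsymm; positivity⟩

theorem mul_sq_eq_cubic_axesEsymm (hv : v ∈ shapeDomain) (s : ℝ) :
    (s + major v ^ 2) * (s + middle v ^ 2) * (s + minor v ^ 2) = cubic (axesEsymm v) s := by
  obtain ⟨h1, h2, hz, -⟩ := hv
  have hM := major_pos h1 h2
  exact mul_mul_eq_cubic (by unfold middle; field_simp) s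

theorem hasDerivAt_add_smul {E : Type*} [NormedAddCommGroup E] [NormedSpace ℝ E] (x d : E)
    (t : ℝ) : HasDerivAt (fun t : ℝ => x + t • d) d t :=
  ((hasDerivAt_id t).smul_const d).const_add x |>.congr_deriv (one_smul ℝ d)

theorem strictConcaveOn_cubic_rpow {C : Set (ℝ × ℝ)} (hC : Convex ℝ C) (hCr : C ⊆ convexityRegion)
    {s : ℝ} (hs : 0 < s) :
    StrictConcaveOn ℝ C fun v => cubic (axesEsymm v) s ^ (-(1 / 2) : ℝ) := by
  refine strictConcaveOn_of_forall_line hC fun x d hd => ?_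
  have hmotion : ∀ t ∈ {t : ℝ | x + t • d ∈ C}, IsShapeMotionAt _ _ _ _ _ t := fun t ht =>
    isShapeMotionAt (hasDerivAt_add_smul x d t) (hCr ht).1
  refine strictConcaveOn_rpow_neg (convex_setOf_add_smul_mem hC x d) one_half_pos
    (fun t _ => cubic_pos (axesEsymm_nonneg _) hs.le)
    (fun t ht => ((((hmotion t ht).hasDerivAt_sum.mul_const (s ^ 2)).const_add (s ^ 3)).add
      ((hmotion t ht).hasDerivAt_pair.mul_const s)).add_const 1)
    (fun t ht => ((hmotion t ht).hasDerivAt_sumVel.mul_const (s ^ 2)).add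
      ((hmotion t ht).hasDerivAt_pairVel.mul_const s)) fun t ht => ?_
  have hreg := hCr ht
  have hne : ¬(majorRate d (x + t • d) = 0 ∧ minorRate d (x + t • d) = 0) := fun h =>
    hd (eq_zero_of_rates_eq_zero hreg.1 h)
  obtain ⟨⟨-, -, hz, hzb, hba⟩, hb⟩ := hreg
  have hb0 := hz.trans hzb
  have hexp : (1 / 2 : ℝ) + 1 = 3 / 2 := by norm_num
  have hprod := mul_sq_eq_cubic_axesEsymm (hCr ht).1 s
  rw [hexp]
  refine lt_of_lt_of_eq ?_ (congrArg (· * _) hprod)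
  exact three_halves_cubicVel_sq_lt hs (pow_pos hz 2) (pow_le_pow_left₀ hz.le hzb.le 2)
    (pow_le_pow_left₀ hb0.le hba.le 2)
    ((pow_le_pow_left₀ hb0.le hb.le 2).trans_eq (by ring)) hne

end ShapeCoordinates

section EffectivePotential

/-- The least energy of an irrotational fluid ellipsoid with semi-axes given by `v = shapeCoord a z`
whose squared angular momentum is `N2`; it is attained by rotation about the middle axis. -/
noncomputable def effPotential (g N2 : ℝ) (v : ℝ × ℝ) : ℝ :=
  N2 / 4 * (v.1 + v.2) - 2 * π * g * moment 0 (-(1 / 2)) (axesEsymm v)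

theorem strictConvexOn_effPotential {g : ℝ} (hg : 0 < g) (N2 : ℝ) {C : Set (ℝ × ℝ)}
    (hC : Convex ℝ C) (hCr : C ⊆ convexityRegion) : StrictConvexOn ℝ C (effPotential g N2) := by
  have hmoment : StrictConcaveOn ℝ C fun v => moment 0 (-(1 / 2)) (axesEsymm v) := by
    refine strictConcaveOn_integral (by simp) hC (fun v _ =>
      integrableOn_pow_mul_cubic_rpow (by norm_num) (axesEsymm_nonneg v)) ?_
    filter_upwards [ae_restrict_mem measurableSet_Ioi] with s hs
    simpa only [pow_zero, one_mul] using strictConcaveOn_cubic_rpow hC hCr hs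
  refine ⟨hC, fun x hx y hy hxy a b ha hb hab => ?_⟩
  have h := mul_lt_mul_of_pos_left (hmoment.2 hx hy hxy ha hb hab) (by positivity : 0 < 2 * π * g)
  simp only [effPotential, smul_eq_mul, Prod.fst_add, Prod.snd_add, Prod.smul_fst,
    Prod.smul_snd] at h ⊢
  linarith

variable {v : ℝ × ℝ}

theorem riC1_eq_moment (g : ℝ) (hv : v ∈ shapeDomain) :
    riC1 g (major v) (middle v) (minor v) = 2 * π * g * moment 1 (-3 / 2) (axesEsymm v) := by
  simp only [riC1, moment, mul_sq_eq_cubic_axesEsymm hv, pow_one]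

theorem riC2_eq_moment (g : ℝ) (hv : v ∈ shapeDomain) :
    riC2 g (major v) (middle v) (minor v) = 2 * π * g * moment 2 (-3 / 2) (axesEsymm v) := by
  simp only [riC2, moment, mul_sq_eq_cubic_axesEsymm hv]

theorem hasDerivAt_axesEsymm {c : ℝ → ℝ × ℝ} {d : ℝ × ℝ} {t : ℝ} (hc : HasDerivAt c d t)
    (hct : c t ∈ shapeDomain) : HasDerivAt (fun t => axesEsymm (c t))
      (sumVel (major (c t) ^ 2) (middle (c t) ^ 2) (minor (c t) ^ 2) (majorRate d (c t))
        (minorRate d (c t)),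
      pairVel (major (c t) ^ 2) (middle (c t) ^ 2) (minor (c t) ^ 2) (majorRate d (c t))
        (minorRate d (c t))) t :=
  (isShapeMotionAt hc hct).hasDerivAt_sum.prodMk (isShapeMotionAt hc hct).hasDerivAt_pair

theorem axesEsymm_pos (hv : v ∈ shapeDomain) : 0 < (axesEsymm v).1 ∧ 0 < (axesEsymm v).2 := by
  obtain ⟨-, -, hz, hzb, hba⟩ := hv
  have hb := hz.trans hzb
  have ha := hb.trans hba
  exact ⟨by unfold axesEsymm; positivity, by unfold axesEsymm; positivity⟩

theorem GSp_mul_add_GSm_mul (g : ℝ) (hv : v ∈ shapeDomain) (d : ℝ × ℝ) :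
    GSp g (major v) (middle v) (minor v) * d.1 + GSm g (major v) (middle v) (minor v) * d.2 =
      -2 * (riC2 g (major v) (middle v) (minor v) *
          sumVel (major v ^ 2) (middle v ^ 2) (minor v ^ 2) (majorRate d v) (minorRate d v) +
        riC1 g (major v) (middle v) (minor v) *
          pairVel (major v ^ 2) (middle v ^ 2) (minor v ^ 2) (majorRate d v) (minorRate d v)) := by
  obtain ⟨h1, h2, hz, -⟩ := hv
  have hM := (major_pos h1 h2).ne'
  have hm := hz.ne'
  have hu : (√v.1)⁻¹ = major v - minor v := by unfold major minor; ring
  have hw : (√v.2)⁻¹ = major v + minor v := by unfold major minor; ring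
  simp only [GSp, GSm, sumVel, pairVel, majorRate, minorRate, middle, hu, hw]
  field_simp
  ring

/- The functions `G₊` and `G₋` of the paper are, up to a factor, the partial derivatives of the
gravitational energy. -/
theorem hasLineDerivAt_effPotential (g N2 : ℝ) (hv : v ∈ shapeDomain) (d : ℝ × ℝ) :
    HasLineDerivAt ℝ (effPotential g N2)
      ((N2 - GSp g (major v) (middle v) (minor v)) / 4 * d.1 +
        (N2 - GSm g (major v) (middle v) (minor v)) / 4 * d.2) v d := by
  have hv0 : v + (0 : ℝ) • d = v := by rw [zero_smul, add_zero]
  have hline := hasDerivAt_add_smul v d 0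
  have hsymm := hasDerivAt_axesEsymm hline (hv0.symm ▸ hv)
  rw [hv0] at hsymm
  have hmoment : HasFDerivAt (moment 0 (-(1 / 2))) _ (axesEsymm (v + (0 : ℝ) • d)) :=
    hv0.symm ▸ hasFDerivAt_moment (by norm_num) (axesEsymm_pos hv).1 (axesEsymm_pos hv).2
  have hfst : HasDerivAt (fun t : ℝ => (v + t • d).1) d.1 0 := hline.fst
  have hsnd : HasDerivAt (fun t : ℝ => (v + t • d).2) d.2 0 := hline.snd
  refine HasDerivAt.congr_deriv (((hfst.add hsnd).const_mul (N2 / 4)).sub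
    ((hmoment.comp_hasDerivAt 0 hsymm).const_mul (2 * π * g))) ?_
  have hexp : (-(1 / 2) : ℝ) - 1 = -3 / 2 := by norm_num
  have hG := GSp_mul_add_GSm_mul g hv d
  rw [riC1_eq_moment g hv, riC2_eq_moment g hv] at hG
  simp only [hv0, hexp, zero_add, smul_apply, add_apply,
    ContinuousLinearMap.coe_fst', ContinuousLinearMap.coe_snd', smul_eq_mul]
  linarith

theorem lt_two_mul_of_GSp_eq_GSm {g a b z : ℝ} (hz : 0 < z) (hzb : z < b) (hba : b < a)
    (hC1 : 0 < riC1 g a b z) (hC2 : 0 < riC2 g a b z) (h : GSp g a b z = GSm g a b z) :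
    b < 2 * z := by
  by_contra! hb
  have hb2 : 4 * z ^ 2 ≤ b ^ 2 := by nlinarith
  have ha : 0 < a := (hz.trans hzb).trans hba
  have hcomb : riC1 g a b z *
        ((a ^ 2 + z ^ 2) ^ 3 * b ^ 2 - a ^ 2 * z ^ 2 * (a ^ 4 + 6 * a ^ 2 * z ^ 2 + z ^ 4)) +
      riC2 g a b z * ((a ^ 4 + 6 * a ^ 2 * z ^ 2 + z ^ 4) * b ^ 2 -
        4 * a ^ 2 * z ^ 2 * (a ^ 2 + z ^ 2)) = 0 := by
    unfold GSp GSm at h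
    field_simp at h
    linear_combination (1 / 2) * h
  have hcoeff1 : 0 < (a ^ 2 + z ^ 2) ^ 3 * b ^ 2 -
      a ^ 2 * z ^ 2 * (a ^ 4 + 6 * a ^ 2 * z ^ 2 + z ^ 4) := by
    calc 0 < z ^ 2 * (3 * a ^ 6 + 6 * a ^ 4 * z ^ 2 + 11 * a ^ 2 * z ^ 4 + 4 * z ^ 6) := by
          positivity
      _ = (a ^ 2 + z ^ 2) ^ 3 * (4 * z ^ 2) -
          a ^ 2 * z ^ 2 * (a ^ 4 + 6 * a ^ 2 * z ^ 2 + z ^ 4) := by ring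
      _ ≤ _ := by gcongr
  have hcoeff2 : 0 < (a ^ 4 + 6 * a ^ 2 * z ^ 2 + z ^ 4) * b ^ 2 -
      4 * a ^ 2 * z ^ 2 * (a ^ 2 + z ^ 2) := by
    calc 0 < 4 * z ^ 2 * (5 * a ^ 2 * z ^ 2 + z ^ 4) := by positivity
      _ = (a ^ 4 + 6 * a ^ 2 * z ^ 2 + z ^ 4) * (4 * z ^ 2) -
          4 * a ^ 2 * z ^ 2 * (a ^ 2 + z ^ 2) := by ring
      _ ≤ _ := by gcongr
  linarith [mul_pos hC1 hcoeff1, mul_pos hC2 hcoeff2]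

theorem eventually_effPotential_lt {g N2 : ℝ} (hg : 0 < g) (hv : v ∈ convexityRegion)
    (hp : GSp g (major v) (middle v) (minor v) = N2)
    (hm : GSm g (major v) (middle v) (minor v) = N2) :
    ∀ᶠ w in nhds v, w ≠ v → effPotential g N2 v < effPotential g N2 w := by
  obtain ⟨r, hr, hball⟩ := Metric.mem_nhds_iff.mp (convexityRegion_mem_nhds hv)
  have hconv := strictConvexOn_effPotential hg N2 (convex_ball v r) hball
  filter_upwards [Metric.ball_mem_nhds v hr] with w hw hne
  refine lt_of_strictConvexOn_of_hasLineDerivAt_zero hconv (Metric.mem_ball_self hr) hw hne.symm ?_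
  simpa only [hp, hm, sub_self, zero_div, zero_mul, add_zero] using
    hasLineDerivAt_effPotential g N2 hv.1 (w - v)

end EffectivePotential

section Hamiltonian

theorem memB_iff {a b : ℝ} : memB a b ↔ 0 < (a * b)⁻¹ ∧ (a * b)⁻¹ < b ∧ b < a := by
  have hlt_iff (ha : 0 < a) (hb : 0 < b) : (√a)⁻¹ < b ↔ (a * b)⁻¹ < b := by
    rw [inv_lt_iff_one_lt_mul₀ (sqrt_pos.mpr ha), inv_lt_iff_one_lt_mul₀ (by positivity),
      ← one_lt_sq_iff₀ (by positivity), mul_pow, sq_sqrt ha.le, sq, mul_assoc, mul_comm b a]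
  constructor
  · rintro ⟨hba, hlt, hpos⟩
    have hb : 0 < b := hpos.trans hlt
    have ha : 0 < a := hb.trans hba
    exact ⟨by positivity, (hlt_iff ha hb).mp hlt, hba⟩
  · rintro ⟨hpos, hlt, hba⟩
    have hb : 0 < b := hpos.trans hlt
    have ha : 0 < a := hb.trans hba
    exact ⟨hba, (hlt_iff ha hb).mpr hlt, by positivity⟩

/-- The shape of the ellipsoid in the state `P`, in the coordinates `shapeCoord`. -/
noncomputable def stateShape (P : Fin 10 → ℝ) : ℝ × ℝ := shapeCoord (P 0) (P 0 * P 1)⁻¹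

variable {P : Fin 10 → ℝ}

theorem continuousAt_stateShape (hP : memB (P 0) (P 1)) : ContinuousAt stateShape P := by
  obtain ⟨hz, hzb, hba⟩ := memB_iff.mp hP
  have hcont : ContinuousAt (fun Q : Fin 10 → ℝ => (Q 0 * Q 1)⁻¹) P :=
    ((continuousAt_apply 0 P).mul (continuousAt_apply 1 P)).inv₀ (inv_pos.mp hz).ne'
  have hsub : P 0 - (P 0 * P 1)⁻¹ ≠ 0 := by linarith
  have hadd : P 0 + (P 0 * P 1)⁻¹ ≠ 0 := by linarith
  exact ((((continuousAt_apply 0 P).sub hcont).pow 2).inv₀ (pow_ne_zero 2 hsub)).prodMk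
    ((((continuousAt_apply 0 P).add hcont).pow 2).inv₀ (pow_ne_zero 2 hadd))

theorem eventually_memB (hP : memB (P 0) (P 1)) : ∀ᶠ Q in nhds P, memB (Q 0) (Q 1) := by
  simp only [memB_iff] at hP ⊢
  obtain ⟨hz, hzb, hba⟩ := hP
  have h01 : P 0 * P 1 ≠ 0 := (inv_pos.mp hz).ne'
  have hcont : ContinuousAt (fun Q : Fin 10 → ℝ => (Q 0 * Q 1)⁻¹) P := by
    fun_prop (disch := assumption)
  filter_upwards [continuousAt_const.eventually_lt hcont hz,
    hcont.eventually_lt (continuousAt_apply 1 P) hzb,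
    (continuousAt_apply 1 P).eventually_lt (continuousAt_apply 0 P) hba] with Q hz hzb hba
  exact ⟨hz, hzb, hba⟩

theorem major_stateShape (hP : memB (P 0) (P 1)) : major (stateShape P) = P 0 := by
  obtain ⟨hz, hzb, hba⟩ := memB_iff.mp hP
  exact major_shapeCoord hz (hzb.trans hba)

theorem minor_stateShape (hP : memB (P 0) (P 1)) : minor (stateShape P) = (P 0 * P 1)⁻¹ := by
  obtain ⟨hz, hzb, hba⟩ := memB_iff.mp hP
  exact minor_shapeCoord hz (hzb.trans hba)

theorem middle_stateShape (hP : memB (P 0) (P 1)) : middle (stateShape P) = P 1 := by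
  obtain ⟨hz, hzb, hba⟩ := memB_iff.mp hP
  have h0 : P 0 ≠ 0 := (hz.trans (hzb.trans hba)).ne'
  rw [middle, major_stateShape hP, minor_stateShape hP]
  field_simp

theorem stateShape_mem_shapeDomain (hP : memB (P 0) (P 1)) : stateShape P ∈ shapeDomain := by
  obtain ⟨hz, hzb, hba⟩ := memB_iff.mp hP
  refine ⟨inv_pos.mpr (pow_pos (by linarith) 2), inv_pos.mpr (pow_pos (by linarith) 2), ?_⟩
  rw [minor_stateShape hP, middle_stateShape hP, major_stateShape hP]
  exact ⟨hz, hzb, hba⟩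

theorem gravity_integral_eq_moment {a b z : ℝ} (h : a * b * z = 1) :
    ∫ s in Set.Ioi (0 : ℝ), ((s + a ^ 2) * (s + b ^ 2) * (s + z ^ 2)) ^ (-(1 : ℝ) / 2) =
      moment 0 (-(1 / 2))
        (a ^ 2 + b ^ 2 + z ^ 2, a ^ 2 * b ^ 2 + b ^ 2 * z ^ 2 + a ^ 2 * z ^ 2) := by
  have h2 : a ^ 2 * b ^ 2 * z ^ 2 = 1 := by rw [← mul_pow, ← mul_pow, h, one_pow]
  simp only [moment, mul_mul_eq_cubic h2, pow_zero, one_mul, neg_div]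

theorem differentiableAt_gravity_integral (hP : memB (P 0) (P 1)) :
    DifferentiableAt ℝ (fun p : Fin 10 → ℝ => ∫ s in Set.Ioi (0 : ℝ),
      ((s + p 0 ^ 2) * (s + p 1 ^ 2) * (s + (p 0 * p 1)⁻¹ ^ 2)) ^ (-(1 : ℝ) / 2)) P := by
  have h01 := (inv_pos.mp (memB_iff.mp hP).1).ne'
  have hev : (fun p : Fin 10 → ℝ => ∫ s in Set.Ioi (0 : ℝ),
      ((s + p 0 ^ 2) * (s + p 1 ^ 2) * (s + (p 0 * p 1)⁻¹ ^ 2)) ^ (-(1 : ℝ) / 2)) =ᶠ[nhds P]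
      fun p => moment 0 (-(1 / 2)) (p 0 ^ 2 + p 1 ^ 2 + (p 0 * p 1)⁻¹ ^ 2,
        p 0 ^ 2 * p 1 ^ 2 + p 1 ^ 2 * (p 0 * p 1)⁻¹ ^ 2 + p 0 ^ 2 * (p 0 * p 1)⁻¹ ^ 2) := by
    filter_upwards [eventually_memB hP] with p hp
    exact gravity_integral_eq_moment (mul_inv_cancel₀ (inv_pos.mp (memB_iff.mp hp).1).ne')
  refine DifferentiableAt.congr_of_eventuallyEq ?_ hev
  obtain ⟨hz, hzb, hba⟩ := memB_iff.mp hP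
  have hb := hz.trans hzb
  have ha := hb.trans hba
  refine (hasFDerivAt_moment (by norm_num) (by positivity)
    (by positivity)).differentiableAt.comp P ?_
  fun_prop (disch := assumption)

theorem differentiableAt_Hred (g : ℝ) (hP : memB (P 0) (P 1)) :
    DifferentiableAt ℝ (Hred g) P := by
  obtain ⟨hz, hzb, hba⟩ := memB_iff.mp hP
  have hb := hz.trans hzb
  have ha := hb.trans hba
  have h01 : P 0 * P 1 ≠ 0 := (inv_pos.mp hz).ne'
  have hsq : ∀ {x y : ℝ}, 0 < y → y < x → 2 * (x ^ 2 - y ^ 2) ^ 2 ≠ 0 := fun hy hyx =>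
    mul_ne_zero two_ne_zero
      (pow_ne_zero 2 (sub_pos.mpr (pow_lt_pow_left₀ hyx hy.le two_ne_zero)).ne')
  have hdiv : ∀ {u v : (Fin 10 → ℝ) → ℝ}, DifferentiableAt ℝ u P → DifferentiableAt ℝ v P →
      v P ≠ 0 → DifferentiableAt ℝ (fun p => u p / v p) P := fun hu hv h => by
    simpa only [div_eq_mul_inv] using hu.fun_mul (hv.fun_inv h)
  refine DifferentiableAt.sub (DifferentiableAt.add (DifferentiableAt.add (DifferentiableAt.add
    (hdiv ?_ ?_ (by positivity)) (hdiv ?_ ?_ (hsq hb hba))) (hdiv ?_ ?_ (hsq hz (hzb.trans hba))))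
    (hdiv ?_ ?_ (hsq hz hzb))) ((differentiableAt_gravity_integral hP).const_mul _)
  all_goals fun_prop (disch := assumption)

theorem shape_eq_of_stateShape_eq {Q : Fin 10 → ℝ} (hP : memB (P 0) (P 1))
    (hQ : memB (Q 0) (Q 1)) (h : stateShape P = stateShape Q) : P 0 = Q 0 ∧ P 1 = Q 1 := by
  rw [← major_stateShape hP, ← middle_stateShape hP, h, major_stateShape hQ, middle_stateShape hQ]
  exact ⟨rfl, rfl⟩

/-- The inverse of the moment of inertia about the third axis of an ellipsoid whose semi-axes in
the rotation plane are `x` and `y`, as it enters the energy of an irrotational flow. -/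
noncomputable def rotCoeff (x y : ℝ) : ℝ := (x ^ 2 + y ^ 2) / (x ^ 2 - y ^ 2) ^ 2

/-- The kinetic energy of the stretching motion, in terms of the momenta `c` and `d` conjugate to
the semi-axes `a` and `b`. -/
noncomputable def strainEnergy (a b z c d : ℝ) : ℝ :=
  ((b ^ 2 + z ^ 2) * a ^ 2 * c ^ 2 + (a ^ 2 + z ^ 2) * b ^ 2 * d ^ 2 - 2 * z * c * d) /
    (2 * (a ^ 2 * b ^ 2 + a ^ 2 * z ^ 2 + b ^ 2 * z ^ 2))

section Coefficients

variable {a b z : ℝ}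

theorem two_mul_rotCoeff (hz : 0 < z) (hza : z < a) :
    2 * rotCoeff a z = (shapeCoord a z).1 + (shapeCoord a z).2 := by
  have hsub : a - z ≠ 0 := by linarith
  have hadd : a + z ≠ 0 := by linarith
  have hsq : a ^ 2 - z ^ 2 = (a - z) * (a + z) := by ring
  simp only [rotCoeff, shapeCoord, hsq]
  field_simp
  ring

theorem rotCoeff_pos (hz : 0 < z) (hza : z < a) : 0 < rotCoeff a z := by
  have ha := hz.trans hza
  have hsq : 0 < a ^ 2 - z ^ 2 := sub_pos.mpr (pow_lt_pow_left₀ hza hz.le two_ne_zero)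
  unfold rotCoeff
  positivity

theorem rotCoeff_lt_left (hz : 0 < z) (hzb : z < b) (hba : b < a) :
    rotCoeff a z < rotCoeff a b := by
  have hsq := pow_lt_pow_left₀ hzb hz.le two_ne_zero
  have hsq' := pow_lt_pow_left₀ hba (hz.trans hzb).le two_ne_zero
  have : 0 < a ^ 2 - b ^ 2 := by linarith
  unfold rotCoeff
  gcongr

theorem rotCoeff_lt_right (hz : 0 < z) (hzb : z < b) (hba : b < a) :
    rotCoeff a z < rotCoeff b z := by
  have hsq := pow_lt_pow_left₀ hzb hz.le two_ne_zero
  have hsq' := pow_lt_pow_left₀ hba (hz.trans hzb).le two_ne_zero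
  have hZ : 0 < z ^ 2 := pow_pos hz 2
  unfold rotCoeff
  generalize a ^ 2 = X at *
  generalize b ^ 2 = Y at *
  generalize z ^ 2 = Z at *
  rw [div_lt_div_iff₀ (pow_pos (by linarith) 2) (pow_pos (by linarith) 2), ← sub_pos]
  calc 0 < (X - Y) * ((X - Z) * Y + (Y - Z) * (2 * Z) + (X - Z) * Z) := by
        have : 0 < Y := by linarith
        have : 0 < X - Z := by linarith
        have : 0 < Y - Z := by linarith
        have : 0 < X - Y := by linarith
        positivity
    _ = (Y + Z) * (X - Z) ^ 2 - (X + Z) * (Y - Z) ^ 2 := by ring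

theorem strainEnergy_eq (h : a * b * z = 1) (c d : ℝ) :
    strainEnergy a b z c d = ((a * b * c) ^ 2 + (a * b * d) ^ 2 + (z * (a * c - b * d)) ^ 2) /
      (2 * (a ^ 2 * b ^ 2 + a ^ 2 * z ^ 2 + b ^ 2 * z ^ 2)) := by
  unfold strainEnergy
  congr 1
  linear_combination (2 * z * c * d) * h

theorem strainEnergy_nonneg (h : a * b * z = 1) (c d : ℝ) : 0 ≤ strainEnergy a b z c d := by
  rw [strainEnergy_eq h]
  positivity

theorem strainEnergy_pos (h : a * b * z = 1) {c d : ℝ} (hcd : c ≠ 0 ∨ d ≠ 0) :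
    0 < strainEnergy a b z c d := by
  have hab := left_ne_zero_of_mul_eq_one h
  have ha := left_ne_zero_of_mul hab
  have hb := right_ne_zero_of_mul hab
  rw [strainEnergy_eq h]
  rcases hcd with hc | hd <;> positivity

end Coefficients

theorem axesEsymm_stateShape (hP : memB (P 0) (P 1)) :
    axesEsymm (stateShape P) = (P 0 ^ 2 + P 1 ^ 2 + (P 0 * P 1)⁻¹ ^ 2,
      P 0 ^ 2 * P 1 ^ 2 + P 1 ^ 2 * (P 0 * P 1)⁻¹ ^ 2 + P 0 ^ 2 * (P 0 * P 1)⁻¹ ^ 2) := by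
  rw [axesEsymm, major_stateShape hP, middle_stateShape hP, minor_stateShape hP]

/-- The states with `η_r = 0` and `N2 ≤ ‖η_l‖²`. With an inequality for `‖η_l‖`, the set contains
the coordinate lines in the directions `b`, `c`, `m₁` and `m₃` through `irrotPoint`. -/
def irrotSet (N2 : ℝ) : Set (Fin 10 → ℝ) :=
  {P | P 7 = 0 ∧ P 8 = 0 ∧ P 9 = 0 ∧ N2 ≤ P 4 ^ 2 + P 5 ^ 2 + P 6 ^ 2}

/-- The state of an ellipsoid with semi-axes `b1`, `b2` at rest up to an irrotational flow of
angular momentum `N` about the middle axis. -/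
def irrotPoint (b1 b2 N : ℝ) : Fin 10 → ℝ := ![b1, b2, 0, 0, 0, N, 0, 0, 0, 0]

/- On `irrotSet N2` each of the four terms in parentheses is nonnegative. -/
theorem Hred_eq_effPotential_add (g N2 : ℝ) (hP : memB (P 0) (P 1)) (h7 : P 7 = 0) (h8 : P 8 = 0)
    (h9 : P 9 = 0) : Hred g P = effPotential g N2 (stateShape P) +
      (strainEnergy (P 0) (P 1) (P 0 * P 1)⁻¹ (P 2) (P 3) +
        (rotCoeff (P 1) (P 0 * P 1)⁻¹ - rotCoeff (P 0) (P 0 * P 1)⁻¹) * P 4 ^ 2 / 2 +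
        (rotCoeff (P 0) (P 1) - rotCoeff (P 0) (P 0 * P 1)⁻¹) * P 6 ^ 2 / 2 +
        rotCoeff (P 0) (P 0 * P 1)⁻¹ * (P 4 ^ 2 + P 5 ^ 2 + P 6 ^ 2 - N2) / 2) := by
  obtain ⟨hz, hzb, hba⟩ := memB_iff.mp hP
  have hrot : (stateShape P).1 + (stateShape P).2 = 2 * rotCoeff (P 0) (P 0 * P 1)⁻¹ :=
    (two_mul_rotCoeff hz (hzb.trans hba)).symm
  have henergy : ∀ x y m : ℝ, ((x ^ 2 + y ^ 2) * (m ^ 2 + 0 ^ 2) + 4 * x * y * m * 0) /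
      (2 * (x ^ 2 - y ^ 2) ^ 2) = rotCoeff x y * m ^ 2 / 2 := fun x y m => by
    rw [rotCoeff, mul_comm 2, ← div_div]
    ring
  rw [effPotential, axesEsymm_stateShape hP, hrot]
  simp only [Hred, h7, h8, h9, henergy,
    gravity_integral_eq_moment (mul_inv_cancel₀ (inv_pos.mp hz).ne'), strainEnergy]
  ring

theorem Hred_irrotPoint (g : ℝ) {b1 b2 : ℝ} (hB : memB b1 b2) (N : ℝ) :
    Hred g (irrotPoint b1 b2 N) = effPotential g (N ^ 2) (stateShape (irrotPoint b1 b2 N)) := by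
  rw [Hred_eq_effPotential_add g (N ^ 2) hB rfl rfl rfl]
  simp [irrotPoint, strainEnergy]

theorem effPotential_lt_Hred (g : ℝ) {N : ℝ} (hP : memB (P 0) (P 1)) (hPM : P ∈ irrotSet (N ^ 2))
    (hN : 0 < N) (h5 : 0 < P 5) (hne : P ≠ irrotPoint (P 0) (P 1) N) :
    effPotential g (N ^ 2) (stateShape P) < Hred g P := by
  obtain ⟨h7, h8, h9, hNP⟩ := hPM
  obtain ⟨hz, hzb, hba⟩ := memB_iff.mp hP
  have hvol : P 0 * P 1 * (P 0 * P 1)⁻¹ = 1 := mul_inv_cancel₀ (inv_pos.mp hz).ne'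
  have hstrain := strainEnergy_nonneg hvol (P 2) (P 3)
  have hrot := rotCoeff_pos hz (hzb.trans hba)
  have hleft := sub_pos.mpr (rotCoeff_lt_left hz hzb hba)
  have hright := sub_pos.mpr (rotCoeff_lt_right hz hzb hba)
  have hterm4 := mul_nonneg hright.le (sq_nonneg (P 4))
  have hterm6 := mul_nonneg hleft.le (sq_nonneg (P 6))
  have hterm5 := mul_nonneg hrot.le (sub_nonneg.mpr hNP)
  rw [Hred_eq_effPotential_add g (N ^ 2) hP h7 h8 h9, lt_add_iff_pos_right]
  by_contra! hle
  have hcd : P 2 = 0 ∧ P 3 = 0 := by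
    by_contra! hcd
    linarith [strainEnergy_pos hvol (not_and_or.mp (not_and.mpr hcd))]
  have h4 : P 4 = 0 := pow_eq_zero_iff two_ne_zero |>.mp
    ((mul_eq_zero_iff_left hright.ne').mp (by linarith))
  have h6 : P 6 = 0 := pow_eq_zero_iff two_ne_zero |>.mp
    ((mul_eq_zero_iff_left hleft.ne').mp (by linarith))
  have hP5 : P 5 = N := by
    have h := (mul_eq_zero_iff_left hrot.ne').mp (le_antisymm (by linarith) hterm5)
    rw [h4, h6] at h
    exact (pow_left_inj₀ h5.le hN.le two_ne_zero).mp (by linarith)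
  refine hne (funext fun i => ?_)
  fin_cases i <;> simp [irrotPoint, *]

theorem stateShape_irrotPoint_mem_convexityRegion {g b1 b2 : ℝ} (hg : 0 < g) (hB : memB b1 b2)
    (N : ℝ) (heq : GSp g b1 b2 (b1 * b2)⁻¹ = GSm g b1 b2 (b1 * b2)⁻¹) :
    stateShape (irrotPoint b1 b2 N) ∈ convexityRegion := by
  have hB' : memB (irrotPoint b1 b2 N 0) (irrotPoint b1 b2 N 1) := hB
  have hdom := stateShape_mem_shapeDomain hB'
  have hsymm := axesEsymm_nonneg (stateShape (irrotPoint b1 b2 N))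
  have hC1 := riC1_eq_moment g hdom
  have hC2 := riC2_eq_moment g hdom
  rw [convexityRegion, Set.mem_sep_iff]
  rw [major_stateShape hB', middle_stateShape hB', minor_stateShape hB'] at *
  obtain ⟨hz, hzb, hba⟩ := memB_iff.mp hB
  refine ⟨hdom, lt_two_mul_of_GSp_eq_GSm hz hzb hba (hC1 ▸ ?_) (hC2 ▸ ?_) heq⟩
  · exact mul_pos (by positivity) (moment_pos (by norm_num) hsymm)
  · exact mul_pos (by positivity) (moment_pos (by norm_num) hsymm)

theorem eventually_Hred_lt {g b1 b2 N : ℝ} (hg : 0 < g) (hB : memB b1 b2) (hN : 0 < N)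
    (hp : GSp g b1 b2 (b1 * b2)⁻¹ = N ^ 2) (hm : GSm g b1 b2 (b1 * b2)⁻¹ = N ^ 2) :
    ∀ᶠ P in nhds (irrotPoint b1 b2 N), P ∈ irrotSet (N ^ 2) → P ≠ irrotPoint b1 b2 N →
      Hred g (irrotPoint b1 b2 N) < Hred g P := by
  have hB' : memB (irrotPoint b1 b2 N 0) (irrotPoint b1 b2 N 1) := hB
  have hregion := stateShape_irrotPoint_mem_convexityRegion hg hB N (hp.trans hm.symm)
  have hshape := eventually_effPotential_lt hg hregion (N2 := N ^ 2)
    (by rwa [major_stateShape hB', middle_stateShape hB', minor_stateShape hB'])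
    (by rwa [major_stateShape hB', middle_stateShape hB', minor_stateShape hB'])
  filter_upwards [eventually_memB hB', (continuousAt_stateShape hB').eventually hshape,
    (continuousAt_apply 5 (irrotPoint b1 b2 N)).eventually (lt_mem_nhds hN)]
    with P hP hlt h5 hPM hne
  rw [Hred_irrotPoint g hB]
  by_cases hrest : P = irrotPoint (P 0) (P 1) N
  · have hPval : Hred g P = effPotential g (N ^ 2) (stateShape P) := by
      rw [hrest]; exact Hred_irrotPoint g hP N
    rw [hPval]
    refine hlt fun h => hne ?_
    obtain ⟨h0, h1⟩ := shape_eq_of_stateShape_eq hP hB' h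
    rw [hrest, h0, h1]; rfl
  · refine lt_of_le_of_lt ?_ (effPotential_lt_Hred g hP hPM hN h5 hrest)
    rcases eq_or_ne (stateShape P) (stateShape (irrotPoint b1 b2 N)) with h | h
    · rw [h]
    · exact (hlt h).le

end Hamiltonian

section ReducedFlow

variable {g : ℝ} {s : Set ℝ} {γ : ℝ → Fin 10 → ℝ} {t t' : ℝ}

theorem IsSolution.hasDerivAt (hγ : IsSolution g γ s) (ht : t ∈ s) :
    HasDerivAt γ (RVF g (γ t)) t :=
  hasDerivAt_pi.mpr (hγ t ht).2

theorem IsSolution.left_normSq_eq (hs : s.OrdConnected) (hγ : IsSolution g γ s) (ht : t ∈ s)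
    (ht' : t' ∈ s) : γ t' 4 ^ 2 + γ t' 5 ^ 2 + γ t' 6 ^ 2 = γ t 4 ^ 2 + γ t 5 ^ 2 + γ t 6 ^ 2 := by
  refine eq_of_forall_hasDerivAt_zero (f := fun t => γ t 4 ^ 2 + γ t 5 ^ 2 + γ t 6 ^ 2) hs
    (fun τ hτ => ?_) ht ht'
  obtain ⟨-, hd⟩ := hγ τ hτ
  refine ((((hd 4).fun_pow 2).fun_add ((hd 5).fun_pow 2)).fun_add
    ((hd 6).fun_pow 2)).congr_deriv ?_
  simp only [RVF, Matrix.cons_val]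
  push_cast
  ring

theorem IsSolution.right_normSq_eq (hs : s.OrdConnected) (hγ : IsSolution g γ s) (ht : t ∈ s)
    (ht' : t' ∈ s) : γ t' 7 ^ 2 + γ t' 8 ^ 2 + γ t' 9 ^ 2 = γ t 7 ^ 2 + γ t 8 ^ 2 + γ t 9 ^ 2 := by
  refine eq_of_forall_hasDerivAt_zero (f := fun t => γ t 7 ^ 2 + γ t 8 ^ 2 + γ t 9 ^ 2) hs
    (fun τ hτ => ?_) ht ht'
  obtain ⟨-, hd⟩ := hγ τ hτ
  refine ((((hd 7).fun_pow 2).fun_add ((hd 8).fun_pow 2)).fun_add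
    ((hd 9).fun_pow 2)).congr_deriv ?_
  simp only [RVF, Matrix.cons_val]
  push_cast
  ring

theorem IsSolution.right_eq_zero (hs : s.OrdConnected) (hγ : IsSolution g γ s) (ht : t ∈ s)
    (ht' : t' ∈ s) (h : γ t 7 = 0 ∧ γ t 8 = 0 ∧ γ t 9 = 0) :
    γ t' 7 = 0 ∧ γ t' 8 = 0 ∧ γ t' 9 = 0 := by
  have hnorm := hγ.right_normSq_eq hs ht ht'
  rw [h.1, h.2.1, h.2.2] at hnorm
  refine ⟨?_, ?_, ?_⟩ <;> nlinarith [sq_nonneg (γ t' 7), sq_nonneg (γ t' 8), sq_nonneg (γ t' 9)]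

theorem fderiv_Hred_RVF (g : ℝ) (P : Fin 10 → ℝ) : fderiv ℝ (Hred g) P (RVF g P) = 0 := by
  have hsum : fderiv ℝ (Hred g) P (RVF g P) = ∑ i, RVF g P i * pd g i P := by
    conv_lhs => rw [pi_eq_sum_univ' (RVF g P)]
    simp only [map_sum, map_smul, smul_eq_mul, pd]
  rw [hsum]
  simp only [Fin.sum_univ_ofNat, RVF, Matrix.cons_val]
  ring

theorem IsSolution.Hred_eq (hs : s.OrdConnected) (hγ : IsSolution g γ s) (ht : t ∈ s)
    (ht' : t' ∈ s) : Hred g (γ t') = Hred g (γ t) :=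
  eq_of_forall_hasDerivAt_zero (f := fun t => Hred g (γ t)) hs (fun τ hτ =>
    ((differentiableAt_Hred g (hγ τ hτ).1).hasFDerivAt.comp_hasDerivAt τ
      (hγ.hasDerivAt hτ)).congr_deriv (fderiv_Hred_RVF g (γ τ))) ht ht'

theorem isClosed_irrotSet (N2 : ℝ) : IsClosed (irrotSet N2) := by
  have hcont : Continuous fun P : Fin 10 → ℝ => P 4 ^ 2 + P 5 ^ 2 + P 6 ^ 2 := by fun_prop
  exact (isClosed_eq (continuous_apply 7) continuous_const).inter
    ((isClosed_eq (continuous_apply 8) continuous_const).inter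
      ((isClosed_eq (continuous_apply 9) continuous_const).inter
        (isClosed_le continuous_const hcont)))

variable {b1 b2 N : ℝ}

theorem irrotPoint_add_smul_single_mem_irrotSet (b1 b2 N : ℝ) {i : Fin 10}
    (hi : i ∉ ({5, 7, 8, 9} : Finset (Fin 10))) (c : ℝ) (t : ℝ) :
    irrotPoint b1 b2 N + t • (Pi.single i c : Fin 10 → ℝ) ∈ irrotSet (N ^ 2) := by
  simp only [Finset.mem_insert, Finset.mem_singleton, not_or] at hi
  obtain ⟨h5, h7, h8, h9⟩ := hi
  set P := irrotPoint b1 b2 N + t • (Pi.single i c : Fin 10 → ℝ) with hP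
  have hcoord : ∀ j, i ≠ j → P j = irrotPoint b1 b2 N j := fun j hj => by
    simp [hP, Pi.single_eq_of_ne hj.symm]
  refine ⟨hcoord 7 h7, hcoord 8 h8, hcoord 9 h9, ?_⟩
  rw [hcoord 5 h5, show irrotPoint b1 b2 N 5 = N from rfl]
  linarith [sq_nonneg (P 4), sq_nonneg (P 6)]

theorem pd_irrotPoint_eq_zero (hB : memB b1 b2)
    (hmin : IsLocalMinOn (Hred g) (irrotSet (N ^ 2)) (irrotPoint b1 b2 N)) {i : Fin 10}
    (hi : i ∉ ({5, 7, 8, 9} : Finset (Fin 10))) : pd g i (irrotPoint b1 b2 N) = 0 := by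
  have htangent : ∀ c : ℝ, (Pi.single i c : Fin 10 → ℝ) ∈
      posTangentConeAt (irrotSet (N ^ 2)) (irrotPoint b1 b2 N) := fun c =>
    mem_posTangentConeAt_of_frequently_mem <| Filter.Frequently.of_forall
      (irrotPoint_add_smul_single_mem_irrotSet b1 b2 N hi c)
  refine hmin.hasFDerivWithinAt_eq_zero (y := Pi.single i 1)
    (differentiableAt_Hred g hB).hasFDerivAt.hasFDerivWithinAt (htangent 1) ?_
  rw [← Pi.single_neg]
  exact htangent (-1)

theorem RVF_irrotPoint_eq_zero (hB : memB b1 b2)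
    (hmin : IsLocalMinOn (Hred g) (irrotSet (N ^ 2)) (irrotPoint b1 b2 N)) :
    RVF g (irrotPoint b1 b2 N) = 0 := by
  have hpd := fun i hi => pd_irrotPoint_eq_zero hB hmin (i := i) hi
  ext i
  rw [RVF, hpd 0 (by decide), hpd 1 (by decide), hpd 2 (by decide), hpd 3 (by decide),
    hpd 4 (by decide), hpd 6 (by decide)]
  fin_cases i <;> simp [irrotPoint]

theorem exists_forall_dist_irrotPoint_lt (hB : memB b1 b2)
    (hmin : ∀ᶠ P in nhds (irrotPoint b1 b2 N), P ∈ irrotSet (N ^ 2) → P ≠ irrotPoint b1 b2 N →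
      Hred g (irrotPoint b1 b2 N) < Hred g P) {ε : ℝ} (hε : 0 < ε) :
    ∃ δ > 0, ∀ (T : ℝ) (γ : ℝ → Fin 10 → ℝ), IsSolution g γ (Set.Ico 0 T) →
      γ 0 ∈ irrotSet (N ^ 2) → dist (γ 0) (irrotPoint b1 b2 N) < δ →
      ∀ t ∈ Set.Ico 0 T, dist (γ t) (irrotPoint b1 b2 N) < ε := by
  have hcont : ∀ᶠ P in nhds (irrotPoint b1 b2 N), ContinuousAt (Hred g) P :=
    (eventually_memB hB).mono fun P hP => (differentiableAt_Hred g hP).continuousAt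
  obtain ⟨δ, hδ, hstable⟩ :=
    exists_forall_dist_lt_of_eventually_lt (isClosed_irrotSet (N ^ 2)) hcont hmin hε
  refine ⟨δ, hδ, fun T γ hγ h0 hdist t ht => hstable T γ
    (fun τ hτ => (hγ.hasDerivAt hτ).continuousAt.continuousWithinAt) (fun τ hτ => ?_)
    (fun τ hτ => (hγ.Hred_eq Set.ordConnected_Ico ?_ hτ).le) hdist t ht⟩
  · obtain ⟨h7, h8, h9, hN⟩ := h0
    have hT : (0 : ℝ) ∈ Set.Ico 0 T := ⟨le_rfl, hτ.1.trans_lt hτ.2⟩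
    obtain ⟨h7, h8, h9⟩ := hγ.right_eq_zero Set.ordConnected_Ico hT hτ ⟨h7, h8, h9⟩
    exact ⟨h7, h8, h9, hN.trans_eq (hγ.left_normSq_eq Set.ordConnected_Ico hT hτ).symm⟩
  · exact ⟨le_rfl, hτ.1.trans_lt hτ.2⟩

end ReducedFlow

/-- In the irrotational `S₂` regime (`G^S₊ = G^S₋ > 0`), with
`N = √(G^S₊(b₁,b₂,b₃))`, the point `p* = (b₁,b₂,0,0, 0,N,0, 0,0,0)` is an equilibrium of
the reduced equations, the set `{η_r = 0}` is invariant under the reduced flow, and `p*` is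
Liapunov stable relative to `{(b,c,η_l,η_r) : ‖η_l‖ = N, η_r = 0}`. -/
theorem stmt_8 (g b1 b2 b3 : ℝ) (hg : 0 < g) (hB : memB b1 b2) (hb3 : b3 = (b1 * b2)⁻¹)
    (heq : GSp g b1 b2 b3 = GSm g b1 b2 b3) (hpos : 0 < GSp g b1 b2 b3) :
    RVF g ![b1, b2, 0, 0, 0, Real.sqrt (GSp g b1 b2 b3), 0, 0, 0, 0] = 0 ∧
    (∀ (s : Set ℝ), s.OrdConnected → ∀ γ : ℝ → Fin 10 → ℝ, IsSolution g γ s →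
      (∃ t₀ ∈ s, γ t₀ 7 = 0 ∧ γ t₀ 8 = 0 ∧ γ t₀ 9 = 0) →
      ∀ t ∈ s, γ t 7 = 0 ∧ γ t 8 = 0 ∧ γ t 9 = 0) ∧
    (∀ ε > 0, ∃ δ > 0, ∀ (T : ℝ) (γ : ℝ → Fin 10 → ℝ),
      IsSolution g γ (Set.Ico 0 T) →
      Real.sqrt ((γ 0 4) ^ 2 + (γ 0 5) ^ 2 + (γ 0 6) ^ 2) = Real.sqrt (GSp g b1 b2 b3) →
      (γ 0 7 = 0 ∧ γ 0 8 = 0 ∧ γ 0 9 = 0) →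
      dist (γ 0) ![b1, b2, 0, 0, 0, Real.sqrt (GSp g b1 b2 b3), 0, 0, 0, 0] < δ →
      ∀ t ∈ Set.Ico (0:ℝ) T,
        dist (γ t) ![b1, b2, 0, 0, 0, Real.sqrt (GSp g b1 b2 b3), 0, 0, 0, 0] < ε) := by
  set N := √(GSp g b1 b2 b3) with hN_def
  have hN : 0 < N := sqrt_pos.mpr hpos
  have hp : GSp g b1 b2 (b1 * b2)⁻¹ = N ^ 2 := by rw [← hb3, hN_def, sq_sqrt hpos.le]
  have hm : GSm g b1 b2 (b1 * b2)⁻¹ = N ^ 2 := by rw [← hb3, ← heq, hb3, hp]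
  have hmin := eventually_Hred_lt hg hB hN hp hm
  have hlocal : IsLocalMinOn (Hred g) (irrotSet (N ^ 2)) (irrotPoint b1 b2 N) := by
    filter_upwards [mem_nhdsWithin_of_mem_nhds hmin, self_mem_nhdsWithin] with P hP hPM
    rcases eq_or_ne P (irrotPoint b1 b2 N) with rfl | hne
    exacts [le_rfl, (hP hPM hne).le]
  refine ⟨RVF_irrotPoint_eq_zero hB hlocal,
    fun s hs γ hγ ⟨t₀, ht₀, h0⟩ t ht => hγ.right_eq_zero hs ht₀ ht h0, fun ε hε => ?_⟩
  obtain ⟨δ, hδ, hstable⟩ := exists_forall_dist_irrotPoint_lt hB hmin hε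
  refine ⟨δ, hδ, fun T γ hγ hleft ⟨h7, h8, h9⟩ => hstable T γ hγ ⟨h7, h8, h9, ?_⟩⟩
  exact ((sqrt_eq_iff_eq_sq (by positivity) hN.le).mp hleft).ge
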